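/- Let G = (V,E) be a 2-connected finite simple graph. The base polytope B(M(G)) is full-dimensional in the affine subspace {x ∈ ℝ^E : Σ_{e∈E} x_e = |V|−1}, and its facet-defining inequalities (supporting hyperplanes) are exactly the following: (1) x_e ≥ 0, for each edge e such that G∖e is 2-connected; (2) Σ_{e∈E(S)} x_e ≤ ((|S|−1)/(|V|−1)) Σ_{e∈E} x_e, for each good flat S ⊆ V. -/

import Mathlib

/-!
Write `n = |V|`. For a connected graph the bases of `M(G)` are the spanning trees, so `B(M(G))` is
the convex hull of their incidence vectors (`basePolytopeE_eq`).

**Good flats.** Connectivity of `G[S]` is expressed through cuts (`CutConn`), which turns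
contractions into statements about saturated vertex sets. For `2`-connected `G`, a set `S` is a good
flat iff `G[S]` is `2`-connected and `G - S` is connected (`isGoodFlat_iff`): deleting a vertex of
`G / E(S)` other than the one `S` contracts to leaves a graph that is connected because `G` is
`2`-connected.

**Dimensions.** The dimension of a face is computed from the functionals `φ` that are constant on
its vertices (`affineSpan_hull`, `finrank_face`). If `T` and `T - e + f` are both vertices of the
face, then `φ_e = φ_f`. If `G` is `2`-connected, two edges at a vertex `v` can always be exchanged:
extend a spanning tree of `G - v` by either of them. As `G` is connected, all the `φ_e` are equal
(`const_all`), whence the affine hull. For `x_e = 0` the same argument applies to `G ∖ e`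
(`facet_edge`). For a good flat `S`, the trees inducing a spanning tree of `G[S]` lie on the face;
exchanges inside `G[S]` show that `φ` is constant on `E(S)` (`const_inside`), and exchanges across
cuts with both sides connected, namely `{v}` for `v ∉ S` and `S` itself, show that it is constant off
`E(S)` (`const_outside`). So the functionals constant on the face form a space of dimension two,
and the face has codimension one (`facet_flat`).

**Completeness.** By Edmonds' theorem (`edmonds`), the hull of the spanning trees is given by
`∑ x_e = n - 1`, `x ≥ 0` and `∑_{e ∈ E(U)} x_e ≤ |U| - 1` for all nonempty `U`; this follows from the
greedy property of maximum weight spanning trees. It remains to see that the inequalities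
in the theorem imply these. If `A`, `B` are disjoint with no edges between, the function
`U ↦ ∑_{e ∈ E(U)} x_e - |U|` is modular on `A ∪ N`, `B ∪ N` for every `N` (`sumOn_separation`). Hence
a minimal violated `U` is `2`-connected (`exists_violator`), since it has no separation of order at
most one; and a maximal violated `2`-connected `U` is a good flat, since otherwise `G - U` splits
into `A` and `B`, both `A ∪ U` and `B ∪ U` are `2`-connected, and modularity together with
`∑ x_e = n - 1` shows that one of them is violated too (`sumOn_le_of_good`). Finally, if `G ∖ e` is
not `2`-connected, then `e` is the only edge between `A` and `B` in a separation of `G ∖ e` of order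
at most one, and the inequalities for the two sides give `x_e ≥ 0`
(`nonneg_of_not_twoConnected`).
-/

open SimpleGraph
open scoped Pointwise

namespace Gor

/-! ### Graph-theoretic notions -/

/-- A graph is `2`-connected if it is connected and remains connected after deletion of any
single vertex.  A single edge `K₂` counts as `2`-connected. -/
def IsTwoConnected {V : Type*} (G : SimpleGraph V) : Prop :=
  G.Connected ∧ ∀ v : V, (G.induce {u : V | u ≠ v}).Connected

/-- `E(S)`: the set of edges of `G` with both endpoints in `S`. -/
def edgesIn {V : Type*} (G : SimpleGraph V) (S : Set V) : Set (Sym2 V) :=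
  {e ∈ G.edgeSet | ∀ v ∈ e, v ∈ S}

/-- The simple graph obtained from `G` by contracting all edges in `F`: its vertices are the
connected components of the graph with edge set `F`, two being adjacent if some edge of `G`
joins them. -/
def contractEdges {V : Type*} (G : SimpleGraph V) (F : Set (Sym2 V)) :
    SimpleGraph (SimpleGraph.fromEdgeSet F).ConnectedComponent :=
  SimpleGraph.fromRel fun c d => ∃ u v : V, G.Adj u v ∧
    (SimpleGraph.fromEdgeSet F).connectedComponentMk u = c ∧
    (SimpleGraph.fromEdgeSet F).connectedComponentMk v = d

/-- `S` is a good flat of `G`: the induced subgraph `G[S]` is `2`-connected and the contraction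
of all edges of `E(S)` in `G` is `2`-connected. -/
def IsGoodFlat {V : Type*} (G : SimpleGraph V) (S : Set V) : Prop :=
  IsTwoConnected (G.induce S) ∧ IsTwoConnected (contractEdges G (edgesIn G S))

/-- The weight function `w : E → {1, δ-1}` with `w e = 1` whenever `G∖e` is `2`-connected and
`w e = δ - 1` whenever `G/e` is `2`-connected. -/
def IsCanonicalWeight {V : Type*} (G : SimpleGraph V) (δ : ℕ) (w : Sym2 V → ℕ) : Prop :=
  (∀ e ∈ G.edgeSet, w e = 1 ∨ w e = δ - 1) ∧
  (∀ e ∈ G.edgeSet, IsTwoConnected (G.deleteEdges {e}) → w e = 1) ∧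
  (∀ e ∈ G.edgeSet, IsTwoConnected (contractEdges G {e}) → w e = δ - 1)

/-- A `2`-connected graph `G` satisfies `(♠)_δ` via the weight function `w`. -/
def SatisfiesSpade {V : Type*} (G : SimpleGraph V) (δ : ℕ) (w : Sym2 V → ℕ) : Prop :=
  IsTwoConnected G ∧ IsCanonicalWeight G δ w ∧
  (∑ᶠ e ∈ G.edgeSet, w e) = δ * (Nat.card V - 1) ∧
  ∀ S : Set V, IsGoodFlat G S → (∑ᶠ e ∈ edgesIn G S, w e) + 1 = δ * (S.ncard - 1)

/-- The number of `2`-connected components (blocks) of a graph: the number of inclusion-maximal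
vertex subsets inducing a `2`-connected subgraph. -/
noncomputable def numBlocks {V : Type*} (G : SimpleGraph V) : ℕ :=
  {S : Set V | IsTwoConnected (G.induce S) ∧
    ∀ T : Set V, S ⊆ T → IsTwoConnected (G.induce T) → S = T}.ncard

/-! ### Lattice polytopes and the Gorenstein property -/

/-- A point of `ℝ^η` is a lattice point if all its coordinates are integers. -/
def IsLatticePoint {η : Type*} (x : η → ℝ) : Prop := ∀ i, ∃ z : ℤ, x i = z

/-- The cone over a polytope `P ⊆ ℝ^η`, living in `ℝ^η × ℝ`. -/
def coneOver {η : Type*} (P : Set (η → ℝ)) : Set ((η → ℝ) × ℝ) :=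
  {y | ∃ t : ℝ, ∃ p ∈ P, 0 ≤ t ∧ y = (t • p, t)}

/-- The lattice affinely spanned by the lattice points of `P`, placed at height one;
i.e. the subgroup of `ℝ^η × ℝ` generated by `{(p, 1) : p a lattice point of P}`. -/
def coneLattice {η : Type*} (P : Set (η → ℝ)) : Submodule ℤ ((η → ℝ) × ℝ) :=
  Submodule.span ℤ {y | ∃ p ∈ P, IsLatticePoint p ∧ y = (p, 1)}

/-- `h` is a linear form cutting out a facet-supporting hyperplane of the cone over `P`:
it is nonnegative on the cone and vanishes on a subset of the cone spanning one dimension less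
than the cone itself. -/
def IsFacetForm {η : Type*} (P : Set (η → ℝ)) (h : ((η → ℝ) × ℝ) →ₗ[ℝ] ℝ) : Prop :=
  (∀ y ∈ coneOver P, 0 ≤ h y) ∧
  Module.finrank ℝ (Submodule.span ℝ {y ∈ coneOver P | h y = 0}) + 1 =
    Module.finrank ℝ (Submodule.span ℝ (coneOver P))

/-- `h` is reduced with respect to the lattice spanned by `P`: it takes integer values on the
lattice and attains the value `1` there. -/
def IsReducedForm {η : Type*} (P : Set (η → ℝ)) (h : ((η → ℝ) × ℝ) →ₗ[ℝ] ℝ) : Prop :=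
  (∀ y ∈ coneLattice P, ∃ z : ℤ, h y = z) ∧ ∃ y ∈ coneLattice P, h y = 1

/-- A polytope `P`, regarded as full-dimensional in the affine lattice it spans, is
`δ`-Gorenstein if there is a lattice point `v ∈ δP` with `h (v, δ) = 1` for the reduced
equation `h` of every facet-supporting hyperplane of the cone over `P`. -/
def IsDeltaGorenstein {η : Type*} (P : Set (η → ℝ)) (δ : ℕ) : Prop :=
  ∃ v : η → ℝ, v ∈ (δ : ℝ) • P ∧ (v, (δ : ℝ)) ∈ coneLattice P ∧
    ∀ h : ((η → ℝ) × ℝ) →ₗ[ℝ] ℝ, IsFacetForm P h → IsReducedForm P h → h (v, (δ : ℝ)) = 1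

/-- A polytope is Gorenstein if it is `δ`-Gorenstein for some positive integer `δ`. -/
def IsGorenstein {η : Type*} (P : Set (η → ℝ)) : Prop :=
  ∃ δ : ℕ, 0 < δ ∧ IsDeltaGorenstein P δ

/-! ### Graphic matroids of simple graphs and their polytopes -/

/-- An independent set of the graphic matroid of `G`: a set of edges forming a forest. -/
def IsGraphicIndep {V : Type*} (G : SimpleGraph V) (I : Set (Sym2 V)) : Prop :=
  I ⊆ G.edgeSet ∧ (SimpleGraph.fromEdgeSet I).IsAcyclic

/-- A basis of the graphic matroid of `G`: a maximal forest (spanning forest). -/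
def IsGraphicBasis {V : Type*} (G : SimpleGraph V) (B : Set (Sym2 V)) : Prop :=
  IsGraphicIndep G B ∧ ∀ e ∈ G.edgeSet, e ∉ B → ¬ IsGraphicIndep G (insert e B)

/-- The base polytope `B(M(G))` of the graphic matroid of `G`: the convex hull of the
indicator vectors of the bases. -/
def basePolytope {V : Type*} (G : SimpleGraph V) : Set (Sym2 V → ℝ) :=
  convexHull ℝ {x | ∃ B : Set (Sym2 V), IsGraphicBasis G B ∧
    x = B.indicator fun _ => (1 : ℝ)}

/-- The base polytope `B(M(G))`, regarded inside `ℝ^E` where `E` is the edge set of `G`. -/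
def basePolytopeE {V : Type*} (G : SimpleGraph V) : Set (↥G.edgeSet → ℝ) :=
  convexHull ℝ {x | ∃ B : Set (Sym2 V), IsGraphicBasis G B ∧
    x = (Subtype.val ⁻¹' B).indicator fun _ => (1 : ℝ)}

/-- A homogeneous inequality `g x ≥ 0` is valid for `P` and defines a facet (a supporting
hyperplane whose intersection with `P` has affine dimension one less than `P`). -/
def IsSupportingFaceIneq {α : Type*} (P : Set (α → ℝ)) (g : (α → ℝ) → ℝ) : Prop :=
  (∀ x ∈ P, 0 ≤ g x) ∧
  Module.finrank ℝ (vectorSpan ℝ {x ∈ P | g x = 0}) + 1 =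
    Module.finrank ℝ (vectorSpan ℝ P)

/-! ### Multigraphs -/

/-- A finite undirected loopless multigraph on a vertex type `V` with edge type `E`. -/
structure Multigraph (V E : Type*) where
  ends : E → Sym2 V
  loopless : ∀ e, ¬ (ends e).IsDiag

/-- The underlying simple graph of a multigraph. -/
def Multigraph.toSimple {V E : Type*} (G : Multigraph V E) : SimpleGraph V :=
  SimpleGraph.fromEdgeSet (Set.range G.ends)

/-- `E(S)` for a multigraph: the set of edges with both endpoints in `S`. -/
def Multigraph.edgesIn {V E : Type*} (G : Multigraph V E) (S : Set V) : Set E :=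
  {e | ∀ v ∈ G.ends e, v ∈ S}

/-- A set of edges of a multigraph is a forest (an independent set of the graphic matroid):
no two parallel edges and no cycle. -/
def IsMultiForest {V E : Type*} (G : Multigraph V E) (I : Set E) : Prop :=
  Set.InjOn G.ends I ∧ (SimpleGraph.fromEdgeSet (G.ends '' I)).IsAcyclic

/-- The independence polytope `P(M(G))` of the graphic matroid of a multigraph `G`. -/
def multiIndepPolytope {V E : Type*} (G : Multigraph V E) : Set (E → ℝ) :=
  convexHull ℝ {x | ∃ I : Set E, IsMultiForest G I ∧ x = I.indicator fun _ => (1 : ℝ)}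

/-- The rank of a set of edges in the graphic matroid of a multigraph. -/
noncomputable def mrank {V E : Type*} (G : Multigraph V E) (A : Set E) : ℕ :=
  sSup {n | ∃ I ⊆ A, IsMultiForest G I ∧ I.ncard = n}

/-- A flat of the graphic matroid of a multigraph: adding any further edge increases the rank. -/
def IsGraphicFlat {V E : Type*} (G : Multigraph V E) (A : Set E) : Prop :=
  ∀ e : E, e ∉ A → mrank G (insert e A) ≠ mrank G A

/-- A circuit of the graphic matroid of a multigraph: a minimal dependent set of edges. -/
def IsMultiCircuit {V E : Type*} (G : Multigraph V E) (C : Set E) : Prop :=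
  ¬ IsMultiForest G C ∧ ∀ C' ⊂ C, IsMultiForest G C'

/-- The restriction of the graphic matroid of `G` to `A` is a connected matroid:
`A` is nonempty and any two distinct elements of `A` lie on a common circuit inside `A`. -/
def ConnectedRestriction {V E : Type*} (G : Multigraph V E) (A : Set E) : Prop :=
  A.Nonempty ∧ ∀ e ∈ A, ∀ f ∈ A, e ≠ f → ∃ C ⊆ A, IsMultiCircuit G C ∧ e ∈ C ∧ f ∈ C

/-- `G` is the `m`-blow-up of the simple graph `H`: every edge of `H` is replaced by exactly
`m` parallel edges and there are no other edges. -/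
def IsBlowUp {V E : Type*} (G : Multigraph V E) (m : ℕ) (H : SimpleGraph V) : Prop :=
  (∀ p ∈ H.edgeSet, {e : E | G.ends e = p}.ncard = m) ∧
  ∀ p : Sym2 V, p ∉ H.edgeSet → {e : E | G.ends e = p} = ∅

/-- The condition `(♣)_δ`: `(δ-1)|E(S)| + 1 = δ(|S|-1)` for every vertex subset `S` inducing a
`2`-connected subgraph. -/
def ClubCond {V : Type*} (H : SimpleGraph V) (δ : ℕ) : Prop :=
  ∀ S : Set V, IsTwoConnected (H.induce S) →
    (δ - 1) * (edgesIn H S).ncard + 1 = δ * (S.ncard - 1)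

/-! ### Chordality, `K₄` minors, cycle attachments -/

/-- A chordless cycle: a cycle such that every edge of `G` between vertices of the cycle is an
edge of the cycle. -/
def IsChordlessCycle {V : Type*} (G : SimpleGraph V) {v : V} (c : G.Walk v v) : Prop :=
  c.IsCycle ∧ ∀ e ∈ edgesIn G {u : V | u ∈ c.support}, e ∈ c.edges

/-- `G` is `δ`-chordal: every cycle without a chord has exactly `δ + 1` edges. -/
def IsDeltaChordal {V : Type*} (G : SimpleGraph V) (δ : ℕ) : Prop :=
  ∀ (v : V) (c : G.Walk v v), IsChordlessCycle G c → c.length = δ + 1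

/-- `G` has a `K₄` minor: there are four disjoint nonempty connected branch sets pairwise
joined by an edge. -/
def HasK4Minor {V : Type*} (G : SimpleGraph V) : Prop :=
  ∃ B : Fin 4 → Set V, (∀ i, (B i).Nonempty) ∧ (∀ i, (G.induce (B i)).Connected) ∧
    (Pairwise fun i j => Disjoint (B i) (B j)) ∧
    (Pairwise fun i j => ∃ u ∈ B i, ∃ v ∈ B j, G.Adj u v)

/-- One step of attaching a new `(δ+1)`-cycle to an edge: `B` is obtained from `A` by adding
`δ - 1` new vertices forming a path of length `δ` between the endpoints of an edge of
`H[A]`, these being all new edges. -/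
def AttachStep {V : Type*} (H : SimpleGraph V) (δ : ℕ) (A B : Set V) : Prop :=
  ∃ q : Fin (δ + 1) → V, Function.Injective q ∧
    H.Adj (q 0) (q (Fin.last δ)) ∧ q 0 ∈ A ∧ q (Fin.last δ) ∈ A ∧
    (∀ i : Fin (δ + 1), i ≠ 0 → i ≠ Fin.last δ → q i ∉ A) ∧
    B = A ∪ {x | ∃ i : Fin (δ + 1), i ≠ 0 ∧ i ≠ Fin.last δ ∧ q i = x} ∧
    edgesIn H B = edgesIn H A ∪ {e | ∃ i : Fin δ, e = s(q i.castSucc, q i.succ)}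

/-- `H` can be constructed from the clique `K₂` by repeatedly attaching new `(δ+1)`-cycles to
edges of the preceding graph. -/
def ConstructibleFromK2 {V : Type*} (H : SimpleGraph V) (δ : ℕ) : Prop :=
  ∃ (k : ℕ) (S : Fin (k + 1) → Set V),
    (∃ u v : V, H.Adj u v ∧ S 0 = {u, v}) ∧
    S (Fin.last k) = Set.univ ∧
    ∀ i : Fin k, AttachStep H δ (S i.castSucc) (S i.succ)

/-! ### Gluings, subdivisions, collisions, ears -/

/-- `G` (with distinguished edge `ab`) is the gluing of the graphs `Gs i` along the edges
`es i`: the disjoint union with all the edges `es i` identified to the single edge `ab`. -/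
def IsGluing {ι : Type*} {Vf : ι → Type*} {W : Type*} (Gs : ∀ i, SimpleGraph (Vf i))
    (es : ∀ i, Sym2 (Vf i)) (G : SimpleGraph W) (a b : W) : Prop :=
  a ≠ b ∧ G.Adj a b ∧
  ∃ φ : ∀ i, Vf i → W,
    (∀ i, Function.Injective (φ i)) ∧
    (∀ x : W, ∃ i, x ∈ Set.range (φ i)) ∧
    (∀ i, Sym2.map (φ i) (es i) = s(a, b)) ∧
    (∀ i j, i ≠ j → Set.range (φ i) ∩ Set.range (φ j) = {a, b}) ∧
    ∀ x y : W, G.Adj x y ↔ ∃ i, ∃ u v, (Gs i).Adj u v ∧ φ i u = x ∧ φ i v = y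

/-- `G'` together with the path `q` is the subdivision of `G` obtained by replacing the edge
`uv` by a path of `m` edges `q 0, …, q m` through new vertices. -/
def IsSubdivisionAt {V W : Type*} (G : SimpleGraph V) (u v : V) {m : ℕ}
    (G' : SimpleGraph W) (q : Fin (m + 1) → W) : Prop :=
  ∃ φ : V → W, Function.Injective φ ∧ Function.Injective q ∧
    q 0 = φ u ∧ q (Fin.last m) = φ v ∧
    (∀ i : Fin (m + 1), i ≠ 0 → i ≠ Fin.last m → q i ∉ Set.range φ) ∧
    (∀ x : W, x ∈ Set.range φ ∨ x ∈ Set.range q) ∧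
    ∀ x y : W, G'.Adj x y ↔
      ((∃ a b : V, G.Adj a b ∧ s(a, b) ≠ s(u, v) ∧ φ a = x ∧ φ b = y) ∨
       ∃ i : Fin m, s(x, y) = s(q i.castSucc, q i.succ))

/-- `G` (with the distinguished nonadjacent pair `a b`) is the collision of `G₁` and `G₂` on
the edges `e₁, e₂`: the disjoint union with `e₁` and `e₂` identified and then deleted. -/
def IsCollision {V₁ V₂ W : Type*} (G₁ : SimpleGraph V₁) (G₂ : SimpleGraph V₂)
    (e₁ : Sym2 V₁) (e₂ : Sym2 V₂) (G : SimpleGraph W) (a b : W) : Prop :=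
  a ≠ b ∧ ¬ G.Adj a b ∧
  ∃ (φ₁ : V₁ → W) (φ₂ : V₂ → W),
    Function.Injective φ₁ ∧ Function.Injective φ₂ ∧
    Sym2.map φ₁ e₁ = s(a, b) ∧ Sym2.map φ₂ e₂ = s(a, b) ∧
    (∀ x : W, x ∈ Set.range φ₁ ∨ x ∈ Set.range φ₂) ∧
    Set.range φ₁ ∩ Set.range φ₂ = {a, b} ∧
    ∀ x y : W, G.Adj x y ↔
      ((∃ u v, G₁.Adj u v ∧ s(u, v) ≠ e₁ ∧ φ₁ u = x ∧ φ₁ v = y) ∨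
       (∃ u v, G₂.Adj u v ∧ s(u, v) ≠ e₂ ∧ φ₂ u = x ∧ φ₂ v = y))

/-- The inner vertices of an ear. -/
def earInner {V : Type*} {s : ℕ} (p : Fin (s + 1) → V) : Set V :=
  {x | ∃ i : Fin (s + 1), i ≠ 0 ∧ i ≠ Fin.last s ∧ p i = x}

/-- The edges of an ear. -/
def earEdges {V : Type*} {s : ℕ} (p : Fin (s + 1) → V) : Set (Sym2 V) :=
  {e | ∃ i : Fin s, e = s(p i.castSucc, p i.succ)}

/-- An `s`-ear of `G`: a path with `s` edges whose inner vertices have degree `2` in `G`. -/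
def IsEar {V : Type*} (G : SimpleGraph V) {s : ℕ} (p : Fin (s + 1) → V) : Prop :=
  Function.Injective p ∧ (∀ i : Fin s, G.Adj (p i.castSucc) (p i.succ)) ∧
  ∀ i : Fin (s + 1), i ≠ 0 → i ≠ Fin.last s → (G.neighborSet (p i)).ncard = 2

/-- `T` is the vertex set of an inclusion-maximal proper `2`-connected induced subgraph. -/
def IsMaxProperTwoConnected {V : Type*} (G : SimpleGraph V) (T : Set V) : Prop :=
  IsTwoConnected (G.induce T) ∧ T ≠ Set.univ ∧
  ∀ T' : Set V, T ⊆ T' → T' ≠ Set.univ → IsTwoConnected (G.induce T') → T' = T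

/-! ### `(♠)₂` and `3`-connectivity -/

/-- A `2`-connected graph satisfies the equalities `(♠)₂`:
`|E| = 2(|V|-1)` and `|E(S)| = 2|S| - 3` for every good flat `S`. -/
def Spade2 {V : Type*} (G : SimpleGraph V) : Prop :=
  IsTwoConnected G ∧ G.edgeSet.ncard = 2 * (Nat.card V - 1) ∧
  ∀ S : Set V, IsGoodFlat G S → (edgesIn G S).ncard = 2 * S.ncard - 3

/-- A graph is `3`-connected if it has more than `3` vertices and remains connected after
deletion of any two vertices. -/
def IsThreeConnected {V : Type*} (G : SimpleGraph V) : Prop :=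
  3 < Nat.card V ∧ ∀ u v : V, (G.induce {x : V | x ≠ u ∧ x ≠ v}).Connected

/-! ### Inductive constructions -/

/-- Graphs obtainable from the `δ`-cycle by gluings (Proposition `construction1`) and
`(δ-1)`-subdivisions (Proposition `construction2`). -/
inductive Obtainable (δ : ℕ) : {W : Type} → SimpleGraph W → Prop
  | cycle {W : Type} (G : SimpleGraph W) (e : G ≃g SimpleGraph.cycleGraph δ) :
      Obtainable δ G
  | glue {Vf : Fin (δ - 1) → Type} {W : Type}
      (Gs : ∀ i, SimpleGraph (Vf i)) (ws : ∀ i, Sym2 (Vf i) → ℕ) (es : ∀ i, Sym2 (Vf i))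
      (G : SimpleGraph W) (a b : W)
      (hob : ∀ i, Obtainable δ (Gs i))
      (hsp : ∀ i, SatisfiesSpade (Gs i) δ (ws i))
      (hes : ∀ i, es i ∈ (Gs i).edgeSet)
      (hwe : ∀ i, ws i (es i) = δ - 1)
      (hgl : IsGluing Gs es G a b) : Obtainable δ G
  | subdivide {V W : Type} (G : SimpleGraph V) (w : Sym2 V → ℕ) (u v : V)
      (G' : SimpleGraph W) (q : Fin (δ - 1 + 1) → W)
      (hob : Obtainable δ G) (hsp : SatisfiesSpade G δ w)
      (huv : G.Adj u v) (hw1 : w s(u, v) = 1)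
      (hsub : IsSubdivisionAt G u v G' q) : Obtainable δ G'

/-- Graphs obtainable from the clique `K₄` by a finite sequence of collisions. -/
inductive ObtainableK4 : {W : Type} → SimpleGraph W → Prop
  | k4 {W : Type} (G : SimpleGraph W) (e : G ≃g (⊤ : SimpleGraph (Fin 4))) :
      ObtainableK4 G
  | collide {V₁ V₂ W : Type} (G₁ : SimpleGraph V₁) (G₂ : SimpleGraph V₂)
      (e₁ : Sym2 V₁) (e₂ : Sym2 V₂) (G : SimpleGraph W) (a b : W)
      (h₁ : ObtainableK4 G₁) (h₂ : ObtainableK4 G₂)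
      (he₁ : e₁ ∈ G₁.edgeSet) (he₂ : e₂ ∈ G₂.edgeSet)
      (hc : IsCollision G₁ G₂ e₁ e₂ G a b) : ObtainableK4 G

/-! ### Connectivity through cuts, and good flats -/

/-- `G[S]` is connected, phrased through cuts: `S` is nonempty and a set meeting `S` and closed
under adjacency inside `S` contains all of `S`. -/
def CutConn {V : Type*} (G : SimpleGraph V) (S : Set V) : Prop :=
  S.Nonempty ∧ ∀ P : Set V, (∃ a ∈ S, a ∈ P) →
    (∀ u ∈ S, ∀ v ∈ S, u ∈ P → G.Adj u v → v ∈ P) → S ⊆ P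

section Cuts

variable {V : Type*} {G H : SimpleGraph V} {S : Set V}

/-- A set closed under adjacency is closed under reachability. -/
lemma mem_of_reachable {P : Set V} (hP : ∀ u v, u ∈ P → G.Adj u v → v ∈ P) {a b : V}
    (h : G.Reachable a b) (ha : a ∈ P) : b ∈ P := by
  rw [SimpleGraph.reachable_iff_reflTransGen] at h
  induction h with
  | refl => exact ha
  | tail _ h2 ih => exact hP _ _ ih h2

lemma cutConn_iff : CutConn G S ↔ (G.induce S).Connected := by
  constructor
  · rintro ⟨hne, h⟩
    have : Nonempty S := hne.to_subtype
    refine ⟨fun u v => ?_⟩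
    have := h {w | ∃ hw : w ∈ S, (G.induce S).Reachable u ⟨w, hw⟩} ⟨u, u.2, u.2, .refl _⟩ ?_ v.2
    · exact this.2
    · rintro x hx y hy ⟨_, hr⟩ hxy
      exact ⟨hy, hr.trans (SimpleGraph.Adj.reachable (by simpa using hxy))⟩
  · intro hconn
    obtain ⟨a, ha⟩ := hconn.nonempty
    have hp := hconn.preconnected
    refine ⟨⟨a, ha⟩, fun P ⟨b, hb, hbP⟩ hP c hc => ?_⟩
    exact mem_of_reachable (G := G.induce S) (P := {z : S | z.1 ∈ P})
      (fun u v hu huv => hP u u.2 v v.2 hu (by simpa using huv)) (hp ⟨b, hb⟩ ⟨c, hc⟩) hbP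

lemma cutConn_univ_iff : CutConn G Set.univ ↔ G.Connected := by
  rw [cutConn_iff, (SimpleGraph.induceUnivIso G).connected_iff]

lemma CutConn.mono (h : CutConn G S) (hGH : ∀ u ∈ S, ∀ v ∈ S, G.Adj u v → H.Adj u v) :
    CutConn H S :=
  ⟨h.1, fun P hP hc => h.2 P hP fun u hu v hv hup huv => hc u hu v hv hup (hGH u hu v hv huv)⟩

lemma CutConn.reachable (h : CutConn G S) {a b : V} (ha : a ∈ S) (hb : b ∈ S) :
    G.Reachable a b :=
  h.2 {w | G.Reachable a w} ⟨a, ha, .refl _⟩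
    (fun _ _ _ _ hu huv => SimpleGraph.Reachable.trans hu huv.reachable) hb

/-- A nonempty set that is not connected splits into two nonempty parts without edges between. -/
lemma exists_split (hne : S.Nonempty) (h : ¬ CutConn G S) :
    ∃ A B : Set V, A.Nonempty ∧ B.Nonempty ∧ A ∪ B = S ∧ Disjoint A B ∧
      ∀ a ∈ A, ∀ b ∈ B, ¬ G.Adj a b := by
  simp only [CutConn, hne, true_and, not_forall] at h
  obtain ⟨P, ⟨a, ha, haP⟩, hP, hSP⟩ := h
  obtain ⟨b, hb, hbP⟩ := Set.not_subset.mp hSP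
  exact ⟨S ∩ P, S \ P, ⟨a, ha, haP⟩, ⟨b, hb, hbP⟩, Set.inter_union_sdiff _ _,
    Set.disjoint_sdiff_inter.symm, fun x hx y hy hxy => hy.2 (hP x hx.1 y hy.1 hx.2 hxy)⟩

/-- `G[S]` is `2`-connected, in terms of subsets of the vertex set of `G`. -/
def TC (G : SimpleGraph V) (S : Set V) : Prop :=
  CutConn G S ∧ ∀ v ∈ S, CutConn G (S \ {v})

lemma cutConn_induce_iff {T : Set S} : CutConn (G.induce S) T ↔ CutConn G (Subtype.val '' T) := by
  constructor
  · rintro ⟨hne, h⟩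
    refine ⟨hne.image _, ?_⟩
    rintro P ⟨_, ⟨a, ha, rfl⟩, haP⟩ hP _ ⟨b, hb, rfl⟩
    exact h {z | z.1 ∈ P} ⟨a, ha, haP⟩ (fun u hu v hv hup huv =>
      hP u ⟨u, hu, rfl⟩ v ⟨v, hv, rfl⟩ hup (by simpa using huv)) hb
  · rintro ⟨hne, h⟩
    refine ⟨Set.image_nonempty.mp hne, ?_⟩
    rintro P ⟨a, ha, haP⟩ hP b hb
    have := h (Subtype.val '' P) ⟨a, ⟨a, ha, rfl⟩, ⟨a, haP, rfl⟩⟩ (by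
      rintro _ ⟨u, hu, rfl⟩ _ ⟨v, hv, rfl⟩ ⟨u', hu', huu⟩ huv
      obtain rfl := Subtype.ext huu
      exact ⟨v, hP u' hu v hv hu' (by simpa using huv), rfl⟩) ⟨b, hb, rfl⟩
    simpa using this

lemma isTwoConnected_induce_iff : IsTwoConnected (G.induce S) ↔ TC G S := by
  simp only [IsTwoConnected, TC, cutConn_iff, ← cutConn_univ_iff (G := G.induce S)]
  simp only [← cutConn_iff, cutConn_induce_iff, Subtype.forall]
  have : ∀ a (ha : a ∈ S), Subtype.val '' {u : S | u ≠ ⟨a, ha⟩} = S \ {a} := by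
    intro a ha; ext z; simp [Subtype.ext_iff]; tauto
  simp only [this, Set.image_univ, Subtype.range_coe]

lemma isTwoConnected_iff :
    IsTwoConnected G ↔ CutConn G Set.univ ∧ ∀ v : V, CutConn G {v}ᶜ := by
  simp only [IsTwoConnected, cutConn_univ_iff]
  simp only [cutConn_iff]
  rfl

/-- Contracting edges does not change which (saturated) vertex sets are connected. -/
lemma cutConn_contract_iff {F : Set (Sym2 V)} (hF : F ⊆ G.edgeSet)
    {T : Set (SimpleGraph.fromEdgeSet F).ConnectedComponent} :
    CutConn (contractEdges G F) T ↔
      CutConn G {v | (SimpleGraph.fromEdgeSet F).connectedComponentMk v ∈ T} := by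
  set q := (SimpleGraph.fromEdgeSet F).connectedComponentMk with hq
  have hsurj : ∀ c, ∃ v, q v = c := fun c => c.exists_rep
  constructor
  · rintro ⟨⟨c, hc⟩, h⟩
    obtain ⟨c, rfl⟩ := hsurj c
    refine ⟨⟨c, hc⟩, ?_⟩
    rintro P ⟨a, ha, haP⟩ hP b hb
    -- a closed set is a union of fibres of the contraction map
    have hsat : ∀ u v, q u ∈ T → u ∈ P → q u = q v → v ∈ P := by
      intro u v hu huP huv
      have hr : (SimpleGraph.fromEdgeSet F).Reachable u v := SimpleGraph.ConnectedComponent.exact huv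
      refine (mem_of_reachable (P := {w | q w ∈ T ∧ w ∈ P}) ?_ hr ⟨hu, huP⟩).2
      rintro x y ⟨hx, hxP⟩ hxy
      have e : q x = q y := SimpleGraph.ConnectedComponent.sound hxy.reachable
      have hy : q y ∈ T := e ▸ hx
      exact ⟨hy, hP x hx y hy hxP (hF ((SimpleGraph.fromEdgeSet_adj F).mp hxy).1)⟩
    obtain ⟨b', hb', e⟩ := h (q '' (P ∩ {v | q v ∈ T})) ⟨q a, ha, ⟨a, ⟨haP, ha⟩, rfl⟩⟩ (by
      rintro _ - d hd ⟨u, ⟨huP, huT⟩, rfl⟩ hud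
      rw [contractEdges, SimpleGraph.fromRel_adj] at hud
      have step : ∀ x y, G.Adj x y → q x = q u → q y = d → d ∈ q '' (P ∩ {v | q v ∈ T}) := by
        rintro x y hxy hx rfl
        exact ⟨y, ⟨hP x (show q x ∈ T from hx ▸ huT) y hd (hsat u x huT huP hx.symm) hxy, hd⟩, rfl⟩
      obtain ⟨-, ⟨x, y, hxy, hx, hy⟩ | ⟨y, x, hxy, hy, hx⟩⟩ := hud
      · exact step x y hxy hx hy
      · exact step x y hxy.symm hx hy) hb
    exact hsat b' b hb'.2 hb'.1 e
  · rintro ⟨⟨c, hc⟩, h⟩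
    refine ⟨⟨q c, hc⟩, ?_⟩
    rintro P ⟨a, ha, haP⟩ hP b hb
    obtain ⟨a, rfl⟩ := hsurj a
    obtain ⟨b, rfl⟩ := hsurj b
    refine h {v | q v ∈ P} ⟨a, ha, haP⟩ ?_ hb
    intro u hu v hv huP huv
    by_cases e : q u = q v
    · rw [Set.mem_ofPred_eq, ← e]; exact huP
    · exact hP _ hu _ hv huP (by
        rw [contractEdges, SimpleGraph.fromRel_adj]
        exact ⟨e, .inl ⟨u, v, huv, rfl, rfl⟩⟩)

/-- In a `2`-connected graph, the good flats are the sets `S` with `G[S]` `2`-connected and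
`G - S` connected. -/
lemma isGoodFlat_iff (h2c : IsTwoConnected G) : IsGoodFlat G S ↔ TC G S ∧ CutConn G Sᶜ := by
  rw [IsGoodFlat, isTwoConnected_induce_iff]
  refine and_congr_right fun hS => ?_
  have hF : edgesIn G S ⊆ G.edgeSet := fun e he => he.1
  have hadj : ∀ u v, (SimpleGraph.fromEdgeSet (edgesIn G S)).Adj u v ↔
      G.Adj u v ∧ u ∈ S ∧ v ∈ S := by
    intro u v
    rw [SimpleGraph.fromEdgeSet_adj]
    simp only [edgesIn, Set.mem_ofPred_eq, SimpleGraph.mem_edgeSet, Sym2.mem_iff, forall_eq_or_imp,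
      forall_eq]
    exact ⟨fun h => h.1, fun h => ⟨h, h.1.ne⟩⟩
  have hmk : ∀ u v, (SimpleGraph.fromEdgeSet (edgesIn G S)).connectedComponentMk u =
      (SimpleGraph.fromEdgeSet (edgesIn G S)).connectedComponentMk v ↔
      u = v ∨ (u ∈ S ∧ v ∈ S) := by
    intro u v
    rw [SimpleGraph.ConnectedComponent.eq]
    constructor
    · intro h
      exact mem_of_reachable (P := {w | u = w ∨ (u ∈ S ∧ w ∈ S)}) (by
        rintro x y hx hxy
        obtain ⟨_, h1, h2⟩ := (hadj x y).mp hxy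
        rcases hx with rfl | hx
        · exact .inr ⟨h1, h2⟩
        · exact .inr ⟨hx.1, h2⟩) h (.inl rfl)
    · rintro (rfl | ⟨hu, hv⟩)
      · rfl
      · exact (hS.1.mono (fun a ha b hb hab => (hadj a b).mpr ⟨hab, ha, hb⟩)).reachable hu hv
  rw [isTwoConnected_iff] at h2c ⊢
  rw [cutConn_contract_iff hF]
  have key : ∀ a : V, {v | (SimpleGraph.fromEdgeSet (edgesIn G S)).connectedComponentMk v ∈
      ({(SimpleGraph.fromEdgeSet (edgesIn G S)).connectedComponentMk a} : Set _)ᶜ} =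
      {v | ¬ (v = a ∨ (v ∈ S ∧ a ∈ S))} := by
    intro a; ext v
    simp only [Set.mem_ofPred_eq, Set.mem_compl_iff, Set.mem_singleton_iff, hmk]
  constructor
  · rintro ⟨-, h⟩
    obtain ⟨a, ha⟩ := hS.1.1
    have := h ((SimpleGraph.fromEdgeSet (edgesIn G S)).connectedComponentMk a)
    rw [cutConn_contract_iff hF, key] at this
    convert this using 1
    ext v
    simp only [Set.mem_compl_iff, Set.mem_ofPred_eq, ha, and_true, not_or]
    exact ⟨fun h => ⟨fun e => h (e ▸ ha), h⟩, fun h => h.2⟩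
  · intro h
    refine ⟨by simpa using h2c.1, fun c => ?_⟩
    obtain ⟨a, rfl⟩ := c.exists_rep
    change CutConn _ {(SimpleGraph.fromEdgeSet (edgesIn G S)).connectedComponentMk a}ᶜ
    rw [cutConn_contract_iff hF, key]
    by_cases ha : a ∈ S
    · convert h using 1
      ext v
      simp only [Set.mem_compl_iff, Set.mem_ofPred_eq, ha, and_true, not_or]
      exact ⟨fun h => h.2, fun h => ⟨fun e => h (e ▸ ha), h⟩⟩
    · convert h2c.2 a using 1
      ext v
      simp [ha]

/-- In a `2`-connected graph, a `2`-connected set stays `2`-connected after adding vertices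
whose neighbours are all in the enlarged set. -/
lemma TC.enlarge (h2c : IsTwoConnected G) {U X : Set V} (hU : TC G U) (hUX : U ⊆ X)
    (hX : ∀ a ∈ X, a ∉ U → ∀ b, G.Adj a b → b ∈ X) : TC G X := by
  rw [isTwoConnected_iff] at h2c
  -- the argument for `X \ R` with `R` empty or a single vertex
  have main : ∀ R : Set V, CutConn G (U \ R) → CutConn G Rᶜ → CutConn G (X \ R) := by
    intro R hUR hR
    obtain ⟨w, hwU, hwR⟩ := hUR.1
    refine ⟨⟨w, hUX hwU, hwR⟩, ?_⟩
    rintro P ⟨a, ha, haP⟩ hP b hb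
    -- a nonempty closed part of `X \ R` meets `U`
    have meet : ∀ Q : Set V, (∃ a ∈ X \ R, a ∈ Q) →
        (∀ u ∈ X \ R, ∀ v ∈ X \ R, u ∈ Q → G.Adj u v → v ∈ Q) → ∃ z ∈ U \ R, z ∈ Q := by
      rintro Q ⟨a, ha, haQ⟩ hQ
      by_contra! hcon
      refine hcon w ⟨hwU, hwR⟩ (hR.2 (Q ∩ X) ⟨a, ha.2, haQ, ha.1⟩ ?_ hwR).1
      rintro u hu v hv ⟨huQ, huX⟩ huv
      have hv' : v ∈ X := hX u huX (fun h => hcon u ⟨h, hu⟩ huQ) v huv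
      exact ⟨hQ u ⟨huX, hu⟩ v ⟨hv', hv⟩ huQ huv, hv'⟩
    have hsub : ∀ Q : Set V, (∃ a ∈ X \ R, a ∈ Q) →
        (∀ u ∈ X \ R, ∀ v ∈ X \ R, u ∈ Q → G.Adj u v → v ∈ Q) → U \ R ⊆ Q := fun Q h1 h2 =>
      hUR.2 Q (meet Q h1 h2) fun u hu v hv => h2 u ⟨hUX hu.1, hu.2⟩ v ⟨hUX hv.1, hv.2⟩
    by_contra hbP
    have h1 := hsub P ⟨a, ha, haP⟩ hP ⟨hwU, hwR⟩
    exact hsub Pᶜ ⟨b, hb, hbP⟩ (fun u hu v hv huP huv hvP => huP (hP v hv u hu hvP huv.symm))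
      ⟨hwU, hwR⟩ h1
  refine ⟨?_, fun v hv => ?_⟩
  · simpa using main ∅ (by simpa using hU.1) (by simpa using h2c.1)
  · refine main {v} ?_ (h2c.2 v)
    by_cases hvU : v ∈ U
    · exact hU.2 v hvU
    · rw [Set.sdiff_singleton_eq_self hvU]; exact hU.1

end Cuts

/-! ### Spanning trees and exchanges of edges -/

section Trees

variable {V : Type*} {G : SimpleGraph V} {S : Set V}

/-- The spanning subgraph of `G` whose edges are the edges of `G[S]`. -/
def res (G : SimpleGraph V) (S : Set V) : SimpleGraph V where
  Adj a b := G.Adj a b ∧ a ∈ S ∧ b ∈ S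
  symm := ⟨fun _ _ h => ⟨h.1.symm, h.2.2, h.2.1⟩⟩
  loopless := ⟨fun _ h => h.1.ne rfl⟩

lemma res_le : res G S ≤ G := fun _ _ h => h.1

/-- A connected `G[S]` has a spanning tree, here as a forest on the whole vertex set. -/
lemma CutConn.exists_forest (h : CutConn G S) :
    ∃ I ≤ res G S, I.IsAcyclic ∧ CutConn I S := by
  obtain ⟨I, hI, hac, hr⟩ := (res G S).exists_isAcyclic_reachable_eq_le
  refine ⟨I, hI, hac, h.1, ?_⟩
  rintro P ⟨a, ha, haP⟩ hP b hb
  have hab : (res G S).Reachable a b :=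
    (h.mono (H := res G S) fun u hu v hv huv => ⟨huv, hu, hv⟩).reachable ha hb
  rw [← hr] at hab
  refine (mem_of_reachable (P := P ∩ S) ?_ hab ⟨haP, ha⟩).1
  rintro x y ⟨hxP, hxS⟩ hxy
  exact ⟨hP x hxS y (hI hxy).2.2 hxP hxy, (hI hxy).2.2⟩

/-- Propagation of values of edges through a connected set `S`. The vertices are grouped by a
relation `r`; if any two `A`-edges at related vertices have the same value, and every edge
of `G[S]` is an `A`-edge or joins vertices of the same group, then all `A`-edges at vertices of
`S` have the same value. -/
lemma const_of_star (hS : CutConn G S) (A r : V → V → Prop) (hr : ∀ v, r v v)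
    (hsymm : ∀ a b, A a b → A b a) (φ : Sym2 V → ℝ)
    (hA : ∀ u ∈ S, ∀ v ∈ S, G.Adj u v → A u v ∨ ∀ w, r v w → r u w)
    (hstar : ∀ v v' u w, r v v' → A v u → A v' w → φ s(v, u) = φ s(v', w))
    {a b c d : V} (ha : a ∈ S) (hc : c ∈ S) (hab : A a b) (hcd : A c d) :
    φ s(a, b) = φ s(c, d) := by
  have := hS.2 {v | ∀ v', r v v' → ∀ w, A v' w → φ s(a, b) = φ s(v', w)}
    ⟨a, ha, fun v' hv' w hw => hstar a v' b w hv' hab hw⟩ (by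
      intro u hu v hv huP huv v' hv' w hw
      rcases hA u hu v hv huv with h | h
      · rw [huP u (hr u) v h, Sym2.eq_swap]
        exact hstar v v' u w hv' (hsymm _ _ h) hw
      · exact huP v' (h v' hv') w hw) hc
  exact this c (hr c) d hcd

lemma ncard_edgesIn (T : SimpleGraph V) (S : Set V) :
    (edgesIn T S).ncard = (T.induce S).edgeSet.ncard := by
  have : edgesIn T S = Sym2.map Subtype.val '' (T.induce S).edgeSet := by
    ext e
    induction e with
    | h a b =>
      simp only [edgesIn, Set.mem_ofPred_eq, SimpleGraph.mem_edgeSet, Sym2.mem_iff,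
        forall_eq_or_imp, forall_eq, Set.mem_image]
      constructor
      · rintro ⟨h, ha, hb⟩
        exact ⟨s(⟨a, ha⟩, ⟨b, hb⟩), by simpa using h, rfl⟩
      · rintro ⟨e, he, h⟩
        induction e with
        | h x y =>
          have hxy : T.Adj x y := by simpa using he
          rw [Sym2.map_mk] at h
          rcases Sym2.eq_iff.mp h with ⟨rfl, rfl⟩ | ⟨rfl, rfl⟩
          · exact ⟨hxy, x.2, y.2⟩
          · exact ⟨hxy.symm, y.2, x.2⟩
  rw [this, Set.ncard_image_of_injective _ (Sym2.map.injective Subtype.val_injective)]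

lemma card_edgeSet_of_isTree [Finite V] {T : SimpleGraph V} (hT : T.IsTree) :
    T.edgeSet.ncard + 1 = Nat.card V := by
  rw [← Nat.card_coe_set_eq]
  exact (SimpleGraph.isTree_iff_connected_and_card.mp hT).2

/-- A forest has at most `|V| - 1` edges, and a forest with `|V| - 1` edges is a tree. -/
lemma forest_card [Finite V] [Nonempty V] {F : SimpleGraph V} (hF : F.IsAcyclic) :
    F.edgeSet.ncard + 1 ≤ Nat.card V ∧ (F.edgeSet.ncard + 1 = Nat.card V → F.IsTree) := by
  obtain ⟨T, hFT, -, hT⟩ :=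
    SimpleGraph.connected_top.exists_isTree_le_of_le_of_isAcyclic (le_top : F ≤ ⊤) hF
  have hc := card_edgeSet_of_isTree hT
  have hsub : F.edgeSet ⊆ T.edgeSet := SimpleGraph.edgeSet_mono hFT
  refine ⟨by have := Set.ncard_le_ncard hsub; omega, fun h => ?_⟩
  have : F.edgeSet = T.edgeSet := Set.eq_of_subset_of_ncard_le hsub (by omega)
  rwa [SimpleGraph.edgeSet_inj.mp this]

/-- The exchange property of spanning trees. -/
lemma isTree_exchange [Finite V] {T : SimpleGraph V} (hT : T.IsTree) {a b u v : V} (hab : T.Adj a b)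
    (huv : ¬ (T.deleteEdges {s(a, b)}).Reachable u v) :
    (T.deleteEdges {s(a, b)} ⊔ SimpleGraph.edge u v).IsTree := by
  have : Nonempty V := ⟨a⟩
  have hne : u ≠ v := fun h => huv (h ▸ .refl _)
  refine (forest_card ?_).2 ?_
  · exact SimpleGraph.IsAcyclic.sup_edge_of_not_reachable huv
      (hT.isAcyclic.anti (SimpleGraph.deleteEdges_le _))
  · rw [SimpleGraph.edgeSet_sup, SimpleGraph.edgeSet_edge_of_ne hne, SimpleGraph.edgeSet_deleteEdges,
      Set.union_singleton, Set.ncard_insert_of_notMem, Set.ncard_sdiff_singleton_of_mem (show s(a, b) ∈ T.edgeSet from hab)]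
    · have := card_edgeSet_of_isTree hT
      have : 0 < T.edgeSet.ncard := (Set.ncard_pos (Set.toFinite _)).mpr ⟨s(a, b), hab⟩
      omega
    · intro h
      refine huv (SimpleGraph.Adj.reachable ?_)
      rw [← SimpleGraph.mem_edgeSet, SimpleGraph.edgeSet_deleteEdges]
      exact h

lemma ncard_edgesIn_le [Finite V] {T : SimpleGraph V} (hT : T.IsAcyclic) (hS : S.Nonempty) :
    (edgesIn T S).ncard + 1 ≤ S.ncard := by
  have : Nonempty S := hS.to_subtype
  rw [ncard_edgesIn, ← Nat.card_coe_set_eq S]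
  exact (forest_card (hT.induce S)).1

lemma CutConn.le_ncard_edgesIn {T : SimpleGraph V} (hT : CutConn T S) :
    S.ncard ≤ (edgesIn T S).ncard + 1 := by
  rw [ncard_edgesIn, ← Nat.card_coe_set_eq S, ← Nat.card_coe_set_eq (SimpleGraph.edgeSet _)]
  exact (cutConn_iff.mp hT).card_vert_le_card_edgeSet_add_one

/-- The graph `T - e + f`. -/
abbrev swap (T : SimpleGraph V) (a b u v : V) : SimpleGraph V :=
  T.deleteEdges {s(a, b)} ⊔ SimpleGraph.edge u v

lemma swap_le {T : SimpleGraph V} (hT : T ≤ G) {a b u v : V} (huv : G.Adj u v) :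
    swap T a b u v ≤ G :=
  sup_le ((SimpleGraph.deleteEdges_le _).trans hT) ((SimpleGraph.edge_le_iff _).mpr (.inr huv))

/-- If `S` is `2`-connected, two edges `vu`, `vw` inside `S` can be exchanged between spanning
trees of `G` that both induce spanning trees of `G[S]`: extend a spanning tree of `G[S] - v`. -/
lemma exists_swap_inside (hG : CutConn G Set.univ) (hS : TC G S) {v u w : V} (hv : v ∈ S)
    (hu : u ∈ S) (hw : w ∈ S) (hvu : G.Adj v u) (hvw : G.Adj v w) :
    ∃ T ≤ G, T.IsTree ∧ CutConn T S ∧ T.Adj v u ∧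
      ¬ (T.deleteEdges {s(v, u)}).Reachable v w ∧ CutConn (swap T v u v w) S := by
  obtain ⟨I, hI, hac, hIS⟩ := (hS.2 v hv).exists_forest
  have hiso : ∀ z, ¬ I.Adj v z := fun z hz => (hI hz).2.1.2 rfl
  have hnr : ¬ I.Reachable v u := fun h => hvu.ne' <|
    mem_of_reachable (P := {v}) (fun x y hx hxy => (hiso y (hx ▸ hxy)).elim) h rfl
  obtain ⟨T, hIT, hTG, hT⟩ := (cutConn_univ_iff.mp hG).exists_isTree_le_of_le_of_isAcyclic
    (sup_le (hI.trans res_le) ((SimpleGraph.edge_le_iff _).mpr (.inr hvu)))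
    (hac.sup_edge_of_not_reachable hnr)
  have hTvu : T.Adj v u := hIT (.inr (by simp [SimpleGraph.edge_adj, hvu.ne]))
  have hI' : I ≤ T.deleteEdges {s(v, u)} := by
    intro x y hxy
    rw [SimpleGraph.deleteEdges_adj]
    refine ⟨hIT (.inl hxy), fun h => ?_⟩
    rcases Sym2.eq_iff.mp h with ⟨rfl, rfl⟩ | ⟨rfl, rfl⟩
    · exact hiso _ hxy
    · exact hiso _ hxy.symm
  -- adding to `I` any edge from `v` to `S` connects `S`
  have hconn : ∀ (H : SimpleGraph V) (z : V), I ≤ H → z ∈ S → H.Adj v z → CutConn H S := by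
    rintro H z hIH hz hvz
    have h1 := hIS.mono fun x _ y _ hxy => hIH hxy
    have hz' : z ∈ S \ {v} := ⟨hz, hvz.ne'⟩
    refine ⟨⟨v, hv⟩, ?_⟩
    rintro P ⟨a, ha, haP⟩ hP b hb
    have hzP : z ∈ P := by
      by_cases hav : a = v
      · subst hav; exact hP _ hv z hz haP hvz
      · exact h1.2 P ⟨a, ⟨ha, hav⟩, haP⟩ (fun x hx y hy => hP x hx.1 y hy.1) hz'
    by_cases hbv : b = v
    · subst hbv; exact hP z hz _ hv hzP hvz.symm
    · exact h1.2 P ⟨z, hz', hzP⟩ (fun x hx y hy => hP x hx.1 y hy.1) ⟨hb, hbv⟩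
  refine ⟨T, hTG, hT, hconn T u (le_sup_left.trans hIT) hu hTvu, hTvu, fun h => ?_,
    hconn _ w (hI'.trans le_sup_left) hw (.inr (by simp [SimpleGraph.edge_adj, hvw.ne]))⟩
  have huw : (T.deleteEdges {s(v, u)}).Reachable w u :=
    (hIS.mono fun x _ y _ hxy => hI' hxy).reachable ⟨hw, hvw.ne'⟩ ⟨hu, hvu.ne'⟩
  have hbr := SimpleGraph.isAcyclic_iff_forall_adj_isBridge.mp hT.isAcyclic hTvu
  rw [SimpleGraph.isBridge_iff] at hbr
  exact hbr (h.trans huw)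

/-- If both sides of the cut `C` are connected, two edges `su`, `s'w` across the cut can be
exchanged between spanning trees that induce spanning trees on a connected set `S` contained in
one side of the cut. -/
lemma exists_swap_across {C : Set V} (hC : CutConn G C) (hC' : CutConn G Cᶜ)
    (hS : CutConn G S) (hSC : S ⊆ C ∨ S ⊆ Cᶜ) {s u s' w : V} (hs : s ∈ C) (hu : u ∉ C)
    (hs' : s' ∈ C) (hw : w ∉ C) (hsu : G.Adj s u) :
    ∃ T ≤ G, T.IsTree ∧ CutConn T S ∧ T.Adj s u ∧
      ¬ (T.deleteEdges {s(s, u)}).Reachable s' w ∧ CutConn (swap T s u s' w) S := by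
  obtain ⟨I, hI, hac, hIS⟩ := hS.exists_forest
  set J : SimpleGraph V := res G C ⊔ res G Cᶜ ⊔ SimpleGraph.edge s u with hJdef
  have hJsu : J.Adj s u := .inr (by simp [SimpleGraph.edge_adj, hsu.ne])
  have hJG : J ≤ G :=
    sup_le (sup_le res_le res_le) ((SimpleGraph.edge_le_iff _).mpr (.inr hsu))
  have hIJ : I ≤ J := by
    intro x y hxy
    obtain ⟨h, hx, hy⟩ := hI hxy
    rcases hSC with hSC | hSC
    · exact .inl (.inl ⟨h, hSC hx, hSC hy⟩)
    · exact .inl (.inr ⟨h, hSC hx, hSC hy⟩)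
  -- `su` is the only edge of `J` across the cut
  have hcross : ∀ x y, x ∈ C → y ∉ C → J.Adj x y → x = s ∧ y = u := by
    rintro x y hx hy ((h | h) | h)
    · exact (hy h.2.2).elim
    · exact (h.2.1 hx).elim
    · rw [SimpleGraph.edge_adj] at h
      rcases h.1 with ⟨rfl, rfl⟩ | ⟨rfl, rfl⟩
      · exact ⟨rfl, rfl⟩
      · exact (hu hx).elim
  have hJ : J.Connected := by
    rw [← cutConn_univ_iff]
    have h1 : CutConn J C := hC.mono fun x hx y hy h => .inl (.inl ⟨h, hx, hy⟩)
    have h2 : CutConn J Cᶜ := hC'.mono fun x hx y hy h => .inl (.inr ⟨h, hx, hy⟩)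
    refine ⟨⟨s, trivial⟩, ?_⟩
    rintro P ⟨a, -, haP⟩ hP b -
    have hP' : ∀ x y, x ∈ P → J.Adj x y → y ∈ P := fun x y => hP x trivial y trivial
    have k1 : ∀ z ∈ C, z ∈ P → C ⊆ P := fun z hz hzP =>
      h1.2 P ⟨z, hz, hzP⟩ fun x _ y _ => hP' x y
    have k2 : ∀ z ∉ C, z ∈ P → Cᶜ ⊆ P := fun z hz hzP =>
      h2.2 P ⟨z, hz, hzP⟩ fun x _ y _ => hP' x y
    have hsP : s ∈ P := by
      by_cases ha : a ∈ C
      · exact k1 a ha haP hs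
      · exact hP' u s (k2 a ha haP hu) hJsu.symm
    by_cases hb : b ∈ C
    · exact k1 s hs hsP hb
    · exact k2 u hu (hP' s u hsP hJsu) hb
  obtain ⟨T, hIT, hTJ, hT⟩ := hJ.exists_isTree_le_of_le_of_isAcyclic hIJ hac
  have hTsu : T.Adj s u := by
    by_contra hcon
    exact hu <| mem_of_reachable (P := C) (fun x y hx hxy => by
      by_contra hy
      obtain ⟨rfl, rfl⟩ := hcross x y hx hy (hTJ hxy)
      exact hcon hxy) (hT.connected s u) hs
  have hI' : I ≤ T.deleteEdges {s(s, u)} := by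
    intro x y hxy
    rw [SimpleGraph.deleteEdges_adj]
    refine ⟨hIT hxy, fun h => ?_⟩
    obtain ⟨-, hx, hy⟩ := hI hxy
    rcases Sym2.eq_iff.mp h with ⟨rfl, rfl⟩ | ⟨rfl, rfl⟩ <;> rcases hSC with hSC | hSC
    · exact hu (hSC hy)
    · exact hSC hx hs
    · exact hu (hSC hx)
    · exact hSC hy hs
  refine ⟨T, hTJ.trans hJG, hT, hIS.mono fun x _ y _ h => hIT h, hTsu, fun h => ?_,
    hIS.mono fun x _ y _ h => .inl (hI' h)⟩
  refine hw <| mem_of_reachable (P := C) (fun x y hx hxy => ?_) h hs'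
  by_contra hy
  rw [SimpleGraph.deleteEdges_adj] at hxy
  obtain ⟨rfl, rfl⟩ := hcross x y hx hy (hTJ hxy.1)
  exact hxy.2 rfl

end Trees

/-! ### Functionals on `ℝ^ι` and dimensions of faces -/

section Linear

variable {ι : Type*}

open Classical in
/-- The standard basis vector of `ℝ^ι` at `e`. -/
noncomputable def bv (e : ι) : ι → ℝ := Pi.single e 1

lemma dual_eq_sum [Fintype ι] (φ : (ι → ℝ) →ₗ[ℝ] ℝ) (x : ι → ℝ) :
    φ x = ∑ e, φ (bv e) * x e := by
  classical
  conv_lhs => rw [LinearMap.pi_apply_eq_sum_univ φ x]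
  refine Finset.sum_congr rfl fun e _ => ?_
  rw [smul_eq_mul, mul_comm]
  congr 2
  ext f
  simp [bv, Pi.single_apply, eq_comm]

lemma mem_dualAnnihilator_vectorSpan {s : Set (ι → ℝ)} {φ : Module.Dual ℝ (ι → ℝ)} :
    φ ∈ (vectorSpan ℝ s).dualAnnihilator ↔ ∀ x ∈ s, ∀ y ∈ s, φ x = φ y := by
  rw [Submodule.mem_dualAnnihilator]
  constructor
  · intro h x hx y hy
    have := h _ (vsub_mem_vectorSpan ℝ hx hy)
    rwa [vsub_eq_sub, map_sub, sub_eq_zero] at this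
  · intro h w hw
    have : vectorSpan ℝ s ≤ LinearMap.ker φ := by
      rw [vectorSpan_def, Submodule.span_le]
      rintro _ ⟨x, hx, y, hy, rfl⟩
      change φ (x - y) = 0
      rw [map_sub, sub_eq_zero]
      exact h x hx y hy
    exact this hw

lemma eq_on_convexHull {s : Set (ι → ℝ)} {φ : (ι → ℝ) →ₗ[ℝ] ℝ} {r : ℝ}
    (h : ∀ x ∈ s, φ x = r) : ∀ x ∈ convexHull ℝ s, φ x = r := fun _ hx =>
  convexHull_min h (convex_hyperplane (LinearMap.isLinear φ) r) hx

lemma le_on_convexHull {s : Set (ι → ℝ)} {φ : (ι → ℝ) →ₗ[ℝ] ℝ} {r : ℝ}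
    (h : ∀ x ∈ s, φ x ≤ r) : ∀ x ∈ convexHull ℝ s, φ x ≤ r := fun _ hx =>
  convexHull_min h (convex_halfSpace_le (LinearMap.isLinear φ) r) hx

variable [Finite ι]

/-- The linear functional `x ↦ ∑_{e ∈ A} x_e`. -/
noncomputable def sumOn (A : Set ι) : (ι → ℝ) →ₗ[ℝ] ℝ where
  toFun x := ∑ᶠ e ∈ A, x e
  map_add' x y := finsum_mem_add_distrib A.toFinite
  map_smul' c x := by
    simpa using (smul_finsum_mem (r := c) A.toFinite (f := x)).symm

lemma sumOn_apply (A : Set ι) (x : ι → ℝ) : sumOn A x = ∑ᶠ e ∈ A, x e := rfl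

lemma sumOn_univ (x : ι → ℝ) : sumOn Set.univ x = ∑ᶠ e, x e := finsum_mem_univ _

lemma sumOn_eq_sum [Fintype ι] (A : Set ι) (x : ι → ℝ) : sumOn A x = ∑ e, A.indicator x e := by
  rw [sumOn_apply, finsum_mem_def, finsum_eq_sum_of_fintype]

lemma sumOn_bv_of_mem {A : Set ι} {e : ι} (he : e ∈ A) : sumOn A (bv e) = 1 := by
  classical
  have := Fintype.ofFinite ι
  rw [sumOn_eq_sum, Finset.sum_eq_single e]
  · simp [he, bv]
  · intro f _ hf
    simp [Set.indicator_apply, bv, hf]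
  · simp

lemma sumOn_bv_of_notMem {A : Set ι} {e : ι} (he : e ∉ A) : sumOn A (bv e) = 0 := by
  classical
  have := Fintype.ofFinite ι
  rw [sumOn_eq_sum, Finset.sum_eq_zero]
  intro f _
  by_cases hf : f ∈ A
  · have : f ≠ e := fun h => he (h ▸ hf)
    simp [hf, bv, this]
  · simp [hf]

lemma dual_ext {φ ψ : (ι → ℝ) →ₗ[ℝ] ℝ} (h : ∀ e, φ (bv e) = ψ (bv e)) : φ = ψ := by
  classical
  refine LinearMap.pi_ext fun e t => ?_
  have : Pi.single e t = t • bv e := by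
    ext f; by_cases hf : f = e <;> simp [bv, hf]
  rw [this, map_smul, map_smul, h]

variable {𝒯 : Set (ι → ℝ)} {n : ℝ}

/-- If every functional constant on `𝒯` has all its coefficients equal, the functionals vanishing
on the direction of the polytope are the multiples of `∑ x_e`. -/
lemma dualAnnihilator_hull (hn : ∀ x ∈ 𝒯, sumOn Set.univ x = n)
    (hall : ∀ φ : (ι → ℝ) →ₗ[ℝ] ℝ, (∀ x ∈ 𝒯, ∀ y ∈ 𝒯, φ x = φ y) →
      ∀ e f, φ (bv e) = φ (bv f)) :
    (vectorSpan ℝ (convexHull ℝ 𝒯)).dualAnnihilator =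
      Submodule.span ℝ {(sumOn Set.univ : Module.Dual ℝ (ι → ℝ))} := by
  ext φ
  rw [mem_dualAnnihilator_vectorSpan, Submodule.mem_span_singleton]
  constructor
  · intro h
    have h' := hall φ fun x hx y hy =>
      h x (subset_convexHull ℝ _ hx) y (subset_convexHull ℝ _ hy)
    rcases isEmpty_or_nonempty ι with hι | ⟨⟨e₀⟩⟩
    · exact ⟨0, dual_ext fun e => isEmptyElim e⟩
    · refine ⟨φ (bv e₀), dual_ext fun e => ?_⟩
      rw [LinearMap.smul_apply, sumOn_bv_of_mem (Set.mem_univ e), smul_eq_mul, mul_one, h' e₀ e]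
  · rintro ⟨c, rfl⟩ x hx y hy
    rw [LinearMap.smul_apply, LinearMap.smul_apply, eq_on_convexHull hn x hx,
      eq_on_convexHull hn y hy]

lemma sumOn_univ_ne_zero [Nonempty ι] : (sumOn Set.univ : Module.Dual ℝ (ι → ℝ)) ≠ 0 := by
  obtain ⟨e⟩ := ‹Nonempty ι›
  intro h
  have := LinearMap.congr_fun h (bv e)
  rw [sumOn_bv_of_mem (Set.mem_univ e)] at this
  simp at this

lemma affineSpan_hull (hne : 𝒯.Nonempty) (hn : ∀ x ∈ 𝒯, sumOn Set.univ x = n)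
    (hall : ∀ φ : (ι → ℝ) →ₗ[ℝ] ℝ, (∀ x ∈ 𝒯, ∀ y ∈ 𝒯, φ x = φ y) →
      ∀ e f, φ (bv e) = φ (bv f)) :
    (affineSpan ℝ (convexHull ℝ 𝒯) : Set (ι → ℝ)) = {x | sumOn Set.univ x = n} := by
  obtain ⟨p, hp⟩ := hne
  have hp' := subset_convexHull ℝ _ hp
  have key : ∀ v, v ∈ vectorSpan ℝ (convexHull ℝ 𝒯) ↔ sumOn Set.univ v = 0 := by
    intro v
    rw [← Subspace.forall_mem_dualAnnihilator_apply_eq_zero_iff, dualAnnihilator_hull hn hall]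
    constructor
    · intro h
      exact h _ (Submodule.mem_span_singleton_self _)
    · intro h φ hφ
      obtain ⟨c, rfl⟩ := Submodule.mem_span_singleton.mp hφ
      rw [LinearMap.smul_apply, h, smul_zero]
  ext x
  rw [SetLike.mem_coe, ← AffineSubspace.vsub_right_mem_direction_iff_mem
    (mem_affineSpan ℝ hp'), direction_affineSpan, key, vsub_eq_sub, map_sub, hn p hp, sub_eq_zero]
  rfl

/-- Dimension count for facets: if the functionals constant on the vertices with
`∑_{e ∈ A} x_e = r` are combinations of `∑ x_e` and `∑_{e ∈ A} x_e`, that is, have equal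
coefficients on `A` and equal coefficients off `A`, then the face cut out by this equation has
codimension one in the polytope. -/
lemma finrank_face (hn : ∀ x ∈ 𝒯, sumOn Set.univ x = n)
    (hall : ∀ φ : (ι → ℝ) →ₗ[ℝ] ℝ, (∀ x ∈ 𝒯, ∀ y ∈ 𝒯, φ x = φ y) →
      ∀ e f, φ (bv e) = φ (bv f))
    {A : Set ι} (hA : A.Nonempty) (hA' : Aᶜ.Nonempty) (r : ℝ)
    (hface : ∀ φ : (ι → ℝ) →ₗ[ℝ] ℝ,
      (∀ x ∈ 𝒯, sumOn A x = r → ∀ y ∈ 𝒯, sumOn A y = r → φ x = φ y) →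
      (∀ e ∈ A, ∀ f ∈ A, φ (bv e) = φ (bv f)) ∧ (∀ e ∉ A, ∀ f ∉ A, φ (bv e) = φ (bv f))) :
    Module.finrank ℝ (vectorSpan ℝ {x ∈ convexHull ℝ 𝒯 | sumOn A x = r}) + 1 =
      Module.finrank ℝ (vectorSpan ℝ (convexHull ℝ 𝒯)) := by
  obtain ⟨a, ha⟩ := hA
  obtain ⟨b, hb⟩ := hA'
  have : Nonempty ι := ⟨a⟩
  have h1 := Subspace.finrank_add_finrank_dualAnnihilator_eq (vectorSpan ℝ (convexHull ℝ 𝒯))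
  rw [dualAnnihilator_hull hn hall, finrank_span_singleton sumOn_univ_ne_zero] at h1
  have h2 := Subspace.finrank_add_finrank_dualAnnihilator_eq
    (vectorSpan ℝ {x ∈ convexHull ℝ 𝒯 | sumOn A x = r})
  let v : Fin 2 → Module.Dual ℝ (ι → ℝ) := ![sumOn Set.univ, sumOn A]
  have hspan : (vectorSpan ℝ {x ∈ convexHull ℝ 𝒯 | sumOn A x = r}).dualAnnihilator =
      Submodule.span ℝ (Set.range v) := by
    ext φ
    rw [mem_dualAnnihilator_vectorSpan, Matrix.range_cons, Matrix.range_cons, Matrix.range_empty,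
      Set.union_empty, Set.singleton_union, Submodule.mem_span_pair]
    constructor
    · intro h
      obtain ⟨k1, k2⟩ := hface φ fun x hx hxr y hy hyr =>
        h x ⟨subset_convexHull ℝ _ hx, hxr⟩ y ⟨subset_convexHull ℝ _ hy, hyr⟩
      refine ⟨φ (bv b), φ (bv a) - φ (bv b), dual_ext fun e => ?_⟩
      rw [LinearMap.add_apply, LinearMap.smul_apply, LinearMap.smul_apply,
        sumOn_bv_of_mem (Set.mem_univ e)]
      by_cases he : e ∈ A
      · rw [sumOn_bv_of_mem he, k1 e he a ha]; simp
      · rw [sumOn_bv_of_notMem he, k2 e he b hb]; simp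
    · rintro ⟨c, d, rfl⟩ x ⟨hx, hxr⟩ y ⟨hy, hyr⟩
      simp only [LinearMap.add_apply, LinearMap.smul_apply, hxr, hyr, eq_on_convexHull hn x hx,
        eq_on_convexHull hn y hy]
  have hli : LinearIndependent ℝ v := by
    rw [LinearIndependent.pair_iff]
    intro c d h
    have ea := LinearMap.congr_fun h (bv a)
    have eb := LinearMap.congr_fun h (bv b)
    rw [LinearMap.add_apply, LinearMap.smul_apply, LinearMap.smul_apply,
      sumOn_bv_of_mem (Set.mem_univ _)] at ea eb
    rw [sumOn_bv_of_mem ha] at ea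
    rw [sumOn_bv_of_notMem hb] at eb
    simp only [smul_eq_mul, mul_one, mul_zero, add_zero, LinearMap.zero_apply] at ea eb
    exact ⟨eb, by linarith⟩
  rw [hspan, finrank_span_eq_card hli, Fintype.card_fin] at h2
  omega

/-- A nonpositivity criterion by layers (Abel summation): `c` is a combination, with nonnegative
coefficients, of indicators of its upper level sets and of a constant function. -/
lemma layer_aux [Fintype ι] (y : ι → ℝ) (hy : sumOn Set.univ y = 0) (s : Finset ℝ) :
    ∀ c : ι → ℝ, (∀ e, c e ∈ s) → (∀ t, sumOn {e | t ≤ c e} y ≤ 0) → ∑ e, c e * y e ≤ 0 := by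
  induction s using Finset.induction_on_max with
  | empty =>
    intro c hc _
    have : IsEmpty ι := ⟨fun e => by simpa using hc e⟩
    simp
  | insert a s has ih =>
    intro c hc hlev
    rcases s.eq_empty_or_nonempty with rfl | hs
    · have : ∀ e, c e = a := fun e => by simpa using hc e
      rw [sumOn_eq_sum] at hy
      simp only [Set.indicator_univ] at hy
      simp [this, ← Finset.mul_sum, hy]
    · set m := s.max' hs with hm
      have hma : m < a := has _ (s.max'_mem hs)
      have hle : ∀ e, c e ≠ a → c e ∈ s ∧ c e ≤ m := fun e he => by
        have := (Finset.mem_insert.mp (hc e)).resolve_left he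
        exact ⟨this, s.le_max' _ this⟩
      have h1 := ih (fun e => min (c e) m) (fun e => by
        by_cases he : c e = a
        · simp only [he, min_eq_right hma.le]; exact s.max'_mem hs
        · simp only [min_eq_left (hle e he).2]; exact (hle e he).1) (fun t => by
          by_cases ht : t ≤ m
          · simpa [ht] using hlev t
          · simp [ht, sumOn_apply])
      have h2 := mul_nonpos_of_nonneg_of_nonpos (sub_nonneg.mpr hma.le) (hlev a)
      rw [sumOn_eq_sum, Finset.mul_sum] at h2
      have h3 : ∑ e, c e * y e = ∑ e, min (c e) m * y e +
          ∑ e, (a - m) * {e | a ≤ c e}.indicator y e := by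
        rw [← Finset.sum_add_distrib]
        refine Finset.sum_congr rfl fun e _ => ?_
        by_cases he : c e = a
        · simp [he, min_eq_right hma.le]; ring
        · have := (hle e he).2
          simp [this, not_le.mpr (this.trans_lt hma)]
      linarith

lemma layer (φ : (ι → ℝ) →ₗ[ℝ] ℝ) (y : ι → ℝ) (hy : sumOn Set.univ y = 0)
    (hlev : ∀ t, sumOn {e | t ≤ φ (bv e)} y ≤ 0) : φ y ≤ 0 := by
  have := Fintype.ofFinite ι
  rw [dual_eq_sum]
  exact layer_aux y hy (Finset.univ.image fun e => φ (bv e)) _ (fun e => by simp) hlev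

end Linear

/-! ### The spanning tree polytope and functionals constant on its faces -/

section Polytope

variable {V : Type*} {G : SimpleGraph V} {S : Set V}

open Classical in
/-- The value of a functional on `ℝ^E` at the basis vector of an edge (`0` on non-edges). -/
noncomputable def val (φ : (G.edgeSet → ℝ) →ₗ[ℝ] ℝ) (e : Sym2 V) : ℝ :=
  if h : e ∈ G.edgeSet then φ (bv ⟨e, h⟩) else 0

lemma val_coe (φ : (G.edgeSet → ℝ) →ₗ[ℝ] ℝ) (e : G.edgeSet) : val φ e.1 = φ (bv e) :=
  dif_pos e.2

lemma val_mk (φ : (G.edgeSet → ℝ) →ₗ[ℝ] ℝ) {a b : V} (h : G.Adj a b) :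
    val φ s(a, b) = φ (bv ⟨s(a, b), h⟩) := dif_pos h

/-- The incidence vector of the edge set of `T` in `ℝ^E`. -/
noncomputable def chi (G T : SimpleGraph V) : G.edgeSet → ℝ :=
  (Subtype.val ⁻¹' T.edgeSet).indicator fun _ => (1 : ℝ)

/-- The set of incidence vectors of spanning trees. -/
def trees (G : SimpleGraph V) : Set (G.edgeSet → ℝ) := {x | ∃ T ≤ G, T.IsTree ∧ x = chi G T}

/-- `E(S)` as a set of coordinates of `ℝ^E`. -/
def inS (G : SimpleGraph V) (S : Set V) : Set G.edgeSet := {e | (e : Sym2 V) ∈ edgesIn G S}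

lemma mem_inS_mk {a b : V} (h : G.Adj a b) :
    (⟨s(a, b), h⟩ : G.edgeSet) ∈ inS G S ↔ a ∈ S ∧ b ∈ S := by
  simp [inS, edgesIn]

lemma inS_univ : inS G Set.univ = Set.univ := by
  ext e; simp [inS, edgesIn]

lemma chi_apply {T : SimpleGraph V} {e : G.edgeSet} (he : e.1 ∈ T.edgeSet) : chi G T e = 1 := by
  simp [chi, he]

lemma chi_apply' {T : SimpleGraph V} {e : G.edgeSet} (he : e.1 ∉ T.edgeSet) : chi G T e = 0 := by
  simp [chi, he]

lemma cutConn_singleton (v : V) : CutConn G {v} := by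
  refine ⟨Set.singleton_nonempty v, ?_⟩
  rintro P ⟨a, rfl, haP⟩ - _ rfl
  exact haP

lemma chi_swap {T : SimpleGraph V} {a b u v : V} {e f : G.edgeSet} (he : e.1 = s(a, b))
    (hf : f.1 = s(u, v)) (hab : T.Adj a b)
    (hnr : ¬ (T.deleteEdges {s(a, b)}).Reachable u v) :
    chi G (swap T a b u v) = chi G T - bv e + bv f := by
  classical
  ext g
  have huv : u ≠ v := fun h => hnr (h ▸ .refl _)
  have heT : e.1 ∈ T.edgeSet := he ▸ hab
  have hfT : f ≠ e → f.1 ∉ T.edgeSet := fun hne h => by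
    rw [hf] at h
    refine hnr (SimpleGraph.Adj.reachable ((SimpleGraph.deleteEdges_adj).mpr ⟨h, ?_⟩))
    exact fun h' => hne (Subtype.ext (hf.trans (h'.trans he.symm)))
  have hmem : g.1 ∈ (swap T a b u v).edgeSet ↔ (g.1 ∈ T.edgeSet ∧ g ≠ e) ∨ g = f := by
    rw [SimpleGraph.edgeSet_sup, SimpleGraph.edgeSet_edge_of_ne huv,
      SimpleGraph.edgeSet_deleteEdges, ← he, ← hf, Ne, Subtype.ext_iff, Subtype.ext_iff]
    rfl
  simp only [chi, bv, Pi.add_apply, Pi.sub_apply, Set.indicator_apply, Set.mem_preimage, hmem,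
    Pi.single_apply]
  by_cases h1 : g = f
  · subst h1
    by_cases h2 : g = e
    · subst h2; simp [heT]
    · simp [h2, hfT h2]
  · by_cases h2 : g = e
    · subst h2; simp [h1, heT]
    · simp [h1, h2]

/-- Two spanning trees differing by an exchange of edges force equal coefficients of a functional
that does not distinguish them. -/
lemma val_eq_of_swap (φ : (G.edgeSet → ℝ) →ₗ[ℝ] ℝ) {T : SimpleGraph V} (hT : T ≤ G)
    {a b u v : V} (hab : T.Adj a b) (huv : G.Adj u v)
    (hnr : ¬ (T.deleteEdges {s(a, b)}).Reachable u v)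
    (h : φ (chi G T) = φ (chi G (swap T a b u v))) : val φ s(a, b) = val φ s(u, v) := by
  rw [chi_swap (e := ⟨s(a, b), hT hab⟩) (f := ⟨s(u, v), huv⟩) rfl rfl hab hnr, map_add,
    map_sub] at h
  rw [val_mk φ (hT hab), val_mk φ huv]
  linarith

variable [Finite V]

/-- A functional constant on the spanning trees of a `2`-connected spanning subgraph `H` takes
the same value on all edges of `H`. -/
lemma const_all (φ : (G.edgeSet → ℝ) →ₗ[ℝ] ℝ) {H : SimpleGraph V} (hHG : H ≤ G)
    (h2 : IsTwoConnected H)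
    (hφ : ∀ T ≤ H, T.IsTree → ∀ T' ≤ H, T'.IsTree → φ (chi G T) = φ (chi G T'))
    {a b c d : V} (hab : H.Adj a b) (hcd : H.Adj c d) : val φ s(a, b) = val φ s(c, d) := by
  obtain ⟨h1, h2⟩ := isTwoConnected_iff.mp h2
  refine const_of_star (G := H) h1 H.Adj Eq (fun _ => rfl) (fun _ _ h => h.symm) (val φ)
    (fun u _ v _ h => .inl h) ?_ trivial trivial hab hcd
  rintro v _ u w rfl hvu hvw
  obtain ⟨T, hTH, hT, -, hTvu, hnr, -⟩ := exists_swap_across (cutConn_singleton v) (h2 v)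
    (cutConn_singleton v) (.inl subset_rfl) (Set.mem_singleton v) (u := u) hvu.ne'
    (Set.mem_singleton v) (w := w) hvw.ne' hvu
  exact val_eq_of_swap φ (hTH.trans hHG) hTvu (hHG hvw) hnr
    (hφ T hTH hT _ (swap_le hTH hvw) (isTree_exchange hT hTvu hnr))

/-- A functional constant on the spanning trees of `G` that induce spanning trees of the
`2`-connected graph `G[S]` takes the same value on all edges of `G[S]`. -/
lemma const_inside (φ : (G.edgeSet → ℝ) →ₗ[ℝ] ℝ) (hG : CutConn G Set.univ) (hS : TC G S)
    (hφ : ∀ T ≤ G, T.IsTree → CutConn T S → ∀ T' ≤ G, T'.IsTree → CutConn T' S →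
      φ (chi G T) = φ (chi G T'))
    {a b c d : V} (hab : G.Adj a b) (ha : a ∈ S) (hb : b ∈ S) (hcd : G.Adj c d) (hc : c ∈ S)
    (hd : d ∈ S) : val φ s(a, b) = val φ s(c, d) := by
  refine const_of_star hS.1 (fun x y => G.Adj x y ∧ x ∈ S ∧ y ∈ S) Eq (fun _ => rfl)
    (fun _ _ h => ⟨h.1.symm, h.2.2, h.2.1⟩) (val φ)
    (fun u hu v hv h => .inl ⟨h, hu, hv⟩) ?_ ha hc ⟨hab, ha, hb⟩ ⟨hcd, hc, hd⟩
  rintro v _ u w rfl ⟨hvu, hv, hu⟩ ⟨hvw, -, hw⟩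
  obtain ⟨T, hTG, hT, hTS, hTvu, hnr, hTS'⟩ := exists_swap_inside hG hS hv hu hw hvu hvw
  exact val_eq_of_swap φ hTG hTvu hvw hnr
    (hφ T hTG hT hTS _ (swap_le hTG hvw) (isTree_exchange hT hTvu hnr) hTS')

/-- A functional constant on the spanning trees of `G` that induce spanning trees of `G[S]`, for
a good flat `S`, takes the same value on all edges outside `E(S)`. -/
lemma const_outside (φ : (G.edgeSet → ℝ) →ₗ[ℝ] ℝ) (h2 : IsTwoConnected G) (hS : CutConn G S)
    (hS' : CutConn G Sᶜ)
    (hφ : ∀ T ≤ G, T.IsTree → CutConn T S → ∀ T' ≤ G, T'.IsTree → CutConn T' S →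
      φ (chi G T) = φ (chi G T'))
    {a b c d : V} (hab : G.Adj a b) (hab' : ¬ (a ∈ S ∧ b ∈ S)) (hcd : G.Adj c d)
    (hcd' : ¬ (c ∈ S ∧ d ∈ S)) : val φ s(a, b) = val φ s(c, d) := by
  obtain ⟨h1, h2⟩ := isTwoConnected_iff.mp h2
  refine const_of_star h1 (fun x y => G.Adj x y ∧ ¬ (x ∈ S ∧ y ∈ S))
    (fun x y => x = y ∨ (x ∈ S ∧ y ∈ S)) (fun _ => .inl rfl)
    (fun _ _ h => ⟨h.1.symm, fun h' => h.2 h'.symm⟩) (val φ) ?_ ?_ trivial trivial ⟨hab, hab'⟩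
    ⟨hcd, hcd'⟩
  · intro u _ v _ huv
    by_cases h : u ∈ S ∧ v ∈ S
    · refine .inr ?_
      rintro w (rfl | hw)
      · exact .inr h
      · exact .inr ⟨h.1, hw.2⟩
    · exact .inl ⟨huv, h⟩
  · rintro v v' u w hvv' ⟨hvu, huS⟩ ⟨hvw, hwS⟩
    have key : ∃ T ≤ G, T.IsTree ∧ CutConn T S ∧ T.Adj v u ∧
        ¬ (T.deleteEdges {s(v, u)}).Reachable v' w ∧ CutConn (swap T v u v' w) S := by
      by_cases hv : v ∈ S
      · have hv' : v' ∈ S := by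
          rcases hvv' with rfl | h
          · exact hv
          · exact h.2
        exact exists_swap_across hS hS' hS (.inl subset_rfl) hv (fun h => huS ⟨hv, h⟩) hv'
          (fun h => hwS ⟨hv', h⟩) hvu
      · obtain rfl : v = v' := hvv'.resolve_right fun h => hv h.1
        exact exists_swap_across (cutConn_singleton v) (h2 v) hS
          (.inr fun x hx hxv => hv (hxv ▸ hx)) rfl hvu.ne' rfl hvw.ne' hvu
    obtain ⟨T, hTG, hT, hTS, hTvu, hnr, hTS'⟩ := key
    exact val_eq_of_swap φ hTG hTvu hvw hnr
      (hφ T hTG hT hTS _ (swap_le hTG hvw) (isTree_exchange hT hTvu hnr) hTS')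

/-- The bases of the graphic matroid of a connected graph are the spanning trees. -/
lemma isGraphicBasis_iff (hG : G.Connected) {B : Set (Sym2 V)} :
    IsGraphicBasis G B ↔ ∃ T ≤ G, T.IsTree ∧ B = T.edgeSet := by
  constructor
  · rintro ⟨⟨hBG, hac⟩, hmax⟩
    have hle : SimpleGraph.fromEdgeSet B ≤ G := by
      intro a b hab
      exact hBG ((SimpleGraph.fromEdgeSet_adj _).mp hab).1
    obtain ⟨T, hBT, hTG, hT⟩ := hG.exists_isTree_le_of_le_of_isAcyclic hle hac
    refine ⟨T, hTG, hT, subset_antisymm ?_ ?_⟩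
    · intro e he
      refine SimpleGraph.edgeSet_mono hBT ?_
      rw [SimpleGraph.edgeSet_fromEdgeSet]
      exact ⟨he, fun hd => G.not_isDiag_of_mem_edgeSet (hBG he) hd⟩
    · intro e he
      by_contra heB
      refine hmax e (SimpleGraph.edgeSet_mono hTG he) heB
        ⟨Set.insert_subset (SimpleGraph.edgeSet_mono hTG he) hBG, hT.isAcyclic.anti ?_⟩
      intro a b hab
      obtain ⟨h, hne⟩ := (SimpleGraph.fromEdgeSet_adj _).mp hab
      rcases h with rfl | h
      · exact he
      · exact hBT ((SimpleGraph.fromEdgeSet_adj _).mpr ⟨h, hne⟩)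
  · rintro ⟨T, hTG, hT, rfl⟩
    refine ⟨⟨SimpleGraph.edgeSet_mono hTG, ?_⟩, ?_⟩
    · rw [SimpleGraph.fromEdgeSet_edgeSet]
      exact hT.isAcyclic
    rintro e heG heT ⟨-, hac⟩
    have : Nonempty V := hT.connected.nonempty
    have h1 := (forest_card hac).1
    have h2 := card_edgeSet_of_isTree hT
    rw [SimpleGraph.edgeSet_fromEdgeSet] at h1
    have h3 : insert e T.edgeSet \ {e | e.IsDiag} = insert e T.edgeSet := by
      refine sdiff_eq_left.mpr (Set.disjoint_left.mpr ?_)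
      rintro f (rfl | hf)
      · exact G.not_isDiag_of_mem_edgeSet heG
      · exact T.not_isDiag_of_mem_edgeSet hf
    have h4 : (insert e T.edgeSet).ncard + 1 ≤ Nat.card V := by
      rw [← h3]; exact h1
    rw [Set.ncard_insert_of_notMem heT] at h4
    omega

lemma basePolytopeE_eq (hG : G.Connected) : basePolytopeE G = convexHull ℝ (trees G) := by
  unfold basePolytopeE
  congr 1
  ext x
  constructor
  · rintro ⟨B, hB, rfl⟩
    obtain ⟨T, hTG, hT, rfl⟩ := (isGraphicBasis_iff hG).mp hB
    exact ⟨T, hTG, hT, rfl⟩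
  · rintro ⟨T, hTG, hT, rfl⟩
    exact ⟨_, (isGraphicBasis_iff hG).mpr ⟨T, hTG, hT, rfl⟩, rfl⟩

lemma sumOn_inS_chi {T : SimpleGraph V} (hT : T ≤ G) :
    sumOn (inS G S) (chi G T) = (edgesIn T S).ncard := by
  classical
  have := Fintype.ofFinite G.edgeSet
  have h1 : edgesIn T S = Subtype.val '' (inS G S ∩ Subtype.val ⁻¹' T.edgeSet) := by
    ext e
    constructor
    · rintro ⟨he, h⟩
      exact ⟨⟨e, SimpleGraph.edgeSet_mono hT he⟩, ⟨⟨SimpleGraph.edgeSet_mono hT he, h⟩, he⟩, rfl⟩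
    · rintro ⟨e, ⟨⟨-, h⟩, he⟩, rfl⟩
      exact ⟨he, h⟩
  rw [h1, Set.ncard_image_of_injective _ Subtype.val_injective, sumOn_eq_sum, chi,
    Set.indicator_indicator, Set.ncard_eq_toFinset_card']
  simp only [Set.indicator_apply, Set.mem_inter_iff, Finset.sum_boole]
  congr 2
  ext
  simp

lemma sumOn_chi_of_isTree {T : SimpleGraph V} (hTG : T ≤ G) (hT : T.IsTree) :
    sumOn Set.univ (chi G T) = (Nat.card V : ℝ) - 1 := by
  rw [← inS_univ, sumOn_inS_chi hTG, ← card_edgeSet_of_isTree hT]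
  simp [edgesIn]

/-- The inequality of a vertex set holds at spanning trees, since they induce forests. -/
lemma sumOn_inS_chi_le {T : SimpleGraph V} (hTG : T ≤ G) (hT : T.IsAcyclic) (hS : S.Nonempty) :
    sumOn (inS G S) (chi G T) ≤ (S.ncard : ℝ) - 1 := by
  rw [sumOn_inS_chi hTG, le_sub_iff_add_le]
  exact_mod_cast ncard_edgesIn_le hT hS

/-- The inequality of `S` is tight at the trees that induce a connected graph on `S`. -/
lemma le_sumOn_inS_chi {T : SimpleGraph V} (hTG : T ≤ G) (hTS : CutConn T S) :
    (S.ncard : ℝ) - 1 ≤ sumOn (inS G S) (chi G T) := by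
  rw [sumOn_inS_chi hTG, sub_le_iff_le_add]
  exact_mod_cast hTS.le_ncard_edgesIn

end Polytope

/-! ### Facets -/

section Facets

variable {V : Type*} {G : SimpleGraph V} {S : Set V}

lemma IsTwoConnected.nontrivial (h2c : IsTwoConnected G) : Nontrivial V := by
  obtain ⟨v⟩ := h2c.1.nonempty
  obtain ⟨u, hu⟩ := ((isTwoConnected_iff.mp h2c).2 v).1
  exact ⟨u, v, hu⟩

lemma TC.exists_edge (hS : TC G S) : ∃ a ∈ S, ∃ b ∈ S, G.Adj a b := by
  obtain ⟨v, hv⟩ := hS.1.1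
  obtain ⟨u, hu, huv⟩ := (hS.2 v hv).1
  by_contra! hcon
  exact huv (hS.1.2 {v} ⟨v, hv, rfl⟩ (fun x hx y hy _ hxy => (hcon x hx y hy hxy).elim) hu)

lemma CutConn.exists_cross (hG : CutConn G Set.univ) (hS : S.Nonempty) (hS' : Sᶜ.Nonempty) :
    ∃ a ∈ S, ∃ b ∉ S, G.Adj a b := by
  obtain ⟨a, ha⟩ := hS
  obtain ⟨b, hb⟩ := hS'
  by_contra! hcon
  exact hb (hG.2 S ⟨a, trivial, ha⟩ (fun x _ y _ hx hxy => by
    by_contra hy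
    exact hcon x hx y hy hxy) (Set.mem_univ b))

lemma trees_nonempty (hG : G.Connected) : (trees G).Nonempty := by
  obtain ⟨T, hTG, hT⟩ := hG.exists_isTree_le
  exact ⟨_, T, hTG, hT, rfl⟩

variable [Finite V]

lemma sumOn_of_mem_trees : ∀ x ∈ trees G, sumOn Set.univ x = (Nat.card V : ℝ) - 1 := by
  rintro _ ⟨T, hTG, hT, rfl⟩
  exact sumOn_chi_of_isTree hTG hT

/-- The only functionals constant on all spanning trees are the multiples of `∑ x_e`. -/
lemma const_trees (h2c : IsTwoConnected G) (φ : (G.edgeSet → ℝ) →ₗ[ℝ] ℝ)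
    (hφ : ∀ x ∈ trees G, ∀ y ∈ trees G, φ x = φ y) : ∀ e f, φ (bv e) = φ (bv f) := by
  intro e f
  rw [← val_coe, ← val_coe]
  obtain ⟨⟨a, b⟩, he⟩ := e
  obtain ⟨⟨c, d⟩, hf⟩ := f
  exact const_all φ le_rfl h2c (fun T hTG hT T' hTG' hT' =>
    hφ _ ⟨T, hTG, hT, rfl⟩ _ ⟨T', hTG', hT', rfl⟩) he hf

lemma sumOn_singleton (e : G.edgeSet) (x : G.edgeSet → ℝ) : sumOn {e} x = x e := by
  rw [sumOn_apply, finsum_mem_singleton]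

lemma nonneg_of_mem_hull (e : G.edgeSet) : ∀ x ∈ convexHull ℝ (trees G), 0 ≤ x e := by
  intro x hx
  have := le_on_convexHull (φ := -sumOn {e}) (r := 0) (s := trees G) (by
    rintro _ ⟨T, -, -, rfl⟩
    rw [LinearMap.neg_apply, sumOn_singleton, neg_nonpos]
    exact Set.indicator_nonneg (fun _ _ => zero_le_one) _) x hx
  rwa [LinearMap.neg_apply, sumOn_singleton, neg_nonpos] at this

lemma sumOn_le_of_mem_hull (hS : S.Nonempty) :
    ∀ x ∈ convexHull ℝ (trees G), sumOn (inS G S) x ≤ (S.ncard : ℝ) - 1 := by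
  refine le_on_convexHull ?_
  rintro _ ⟨T, hTG, hT, rfl⟩
  exact sumOn_inS_chi_le hTG hT.isAcyclic hS

/-- If `G ∖ e` is `2`-connected, `x_e = 0` cuts out a facet: its vertices are the spanning trees
of `G ∖ e`, and a functional constant on them has equal coefficients on the edges other than
`e`. -/
lemma facet_edge (h2c : IsTwoConnected G) (e : G.edgeSet)
    (he : IsTwoConnected (G.deleteEdges {(e : Sym2 V)})) :
    IsSupportingFaceIneq (basePolytopeE G) fun x => x e := by
  rw [basePolytopeE_eq h2c.1]
  refine ⟨nonneg_of_mem_hull e, ?_⟩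
  have hle := SimpleGraph.deleteEdges_le (G := G) {(e : Sym2 V)}
  have hset : {x ∈ convexHull ℝ (trees G) | x e = 0} =
      {x ∈ convexHull ℝ (trees G) | sumOn {e} x = 0} := by
    simp only [sumOn_singleton]
  rw [hset]
  refine finrank_face sumOn_of_mem_trees (const_trees h2c) (Set.singleton_nonempty e) ?_ 0 ?_
  · -- some edge survives the deletion of `e`
    have := h2c.nontrivial
    obtain ⟨v, w, hvw⟩ := this
    obtain ⟨a, -, b, -, hab⟩ := (isTwoConnected_iff.mp he).1.exists_cross
      (Set.singleton_nonempty v) ⟨w, hvw.symm⟩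
    refine ⟨⟨s(a, b), hle hab⟩, fun h => ?_⟩
    rw [SimpleGraph.deleteEdges_adj] at hab
    exact hab.2 (congrArg Subtype.val h)
  · intro φ hφ
    refine ⟨?_, ?_⟩
    · rintro _ rfl _ rfl
      rfl
    · intro f hf g hg
      have hmem : ∀ f : G.edgeSet, f ∉ ({e} : Set G.edgeSet) →
          f.1 ∈ (G.deleteEdges {(e : Sym2 V)}).edgeSet := fun f hf => by
        rw [SimpleGraph.edgeSet_deleteEdges]
        exact ⟨f.2, fun h => hf (Subtype.ext h)⟩
      have hf := hmem f hf
      have hg := hmem g hg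
      rw [← val_coe, ← val_coe]
      obtain ⟨⟨a, b⟩, _⟩ := f
      obtain ⟨⟨c, d⟩, _⟩ := g
      have h0 : ∀ T ≤ G.deleteEdges {(e : Sym2 V)}, sumOn {e} (chi G T) = 0 := fun T hT => by
        rw [sumOn_singleton]
        refine chi_apply' fun h => ?_
        have := SimpleGraph.edgeSet_mono hT h
        rw [SimpleGraph.edgeSet_deleteEdges] at this
        exact this.2 rfl
      exact const_all φ hle he (fun T hT hT1 T' hT' hT1' =>
        hφ _ ⟨T, hT.trans hle, hT1, rfl⟩ (h0 T hT) _ ⟨T', hT'.trans hle, hT1', rfl⟩ (h0 T' hT'))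
        hf hg

/-- The inequality of a good flat `S` cuts out a facet: among its vertices are the spanning trees
of `G` that induce spanning trees of `G[S]`, and a functional constant on them has equal coefficients
on `E(S)` and equal coefficients off `E(S)`. -/
lemma facet_flat (h2c : IsTwoConnected G) (hS : IsGoodFlat G S) :
    IsSupportingFaceIneq (basePolytopeE G) fun x =>
      ((S.ncard : ℝ) - 1) / ((Nat.card V : ℝ) - 1) * (∑ᶠ e : G.edgeSet, x e) -
        ∑ᶠ e ∈ {e : G.edgeSet | (e : Sym2 V) ∈ edgesIn G S}, x e := by
  rw [basePolytopeE_eq h2c.1]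
  obtain ⟨hS, hS'⟩ := (isGoodFlat_iff h2c).mp hS
  have hG := (isTwoConnected_iff.mp h2c).1
  have := h2c.nontrivial
  have hcard : ((Nat.card V : ℝ) - 1) ≠ 0 := by
    have := Finite.one_lt_card (α := V)
    have : (1 : ℝ) < Nat.card V := by exact_mod_cast this
    linarith
  have hg : ∀ x ∈ convexHull ℝ (trees G),
      ((S.ncard : ℝ) - 1) / ((Nat.card V : ℝ) - 1) * (∑ᶠ e : G.edgeSet, x e) -
        ∑ᶠ e ∈ {e : G.edgeSet | (e : Sym2 V) ∈ edgesIn G S}, x e =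
      (S.ncard : ℝ) - 1 - sumOn (inS G S) x := fun x hx => by
    rw [← sumOn_univ, eq_on_convexHull sumOn_of_mem_trees x hx, div_mul_cancel₀ _ hcard]
    rfl
  refine ⟨fun x hx => ?_, ?_⟩
  · change 0 ≤ _ - _
    rw [hg x hx]
    exact sub_nonneg.mpr (sumOn_le_of_mem_hull hS.1.1 x hx)
  · have hset : {x ∈ convexHull ℝ (trees G) |
        ((S.ncard : ℝ) - 1) / ((Nat.card V : ℝ) - 1) * (∑ᶠ e : G.edgeSet, x e) -
          ∑ᶠ e ∈ {e : G.edgeSet | (e : Sym2 V) ∈ edgesIn G S}, x e = 0} =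
        {x ∈ convexHull ℝ (trees G) | sumOn (inS G S) x = (S.ncard : ℝ) - 1} := by
      ext x
      refine and_congr_right fun hx => ?_
      rw [hg x hx, sub_eq_zero, eq_comm]
    rw [hset]
    refine finrank_face sumOn_of_mem_trees (const_trees h2c) ?_ ?_ _ ?_
    · obtain ⟨a, ha, b, hb, hab⟩ := hS.exists_edge
      exact ⟨⟨s(a, b), hab⟩, (mem_inS_mk hab).mpr ⟨ha, hb⟩⟩
    · obtain ⟨a, ha, b, hb, hab⟩ := hG.exists_cross hS.1.1 hS'.1
      exact ⟨⟨s(a, b), hab⟩, fun h => hb ((mem_inS_mk hab).mp h).2⟩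
    · intro φ hφ
      have h0 : ∀ T ≤ G, T.IsTree → CutConn T S →
          sumOn (inS G S) (chi G T) = (S.ncard : ℝ) - 1 := fun T hTG hT hTS =>
        le_antisymm (sumOn_inS_chi_le hTG hT.isAcyclic hS.1.1) (le_sumOn_inS_chi hTG hTS)
      have hφ' : ∀ T ≤ G, T.IsTree → CutConn T S → ∀ T' ≤ G, T'.IsTree → CutConn T' S →
          φ (chi G T) = φ (chi G T') := fun T hTG hT hTS T' hTG' hT' hTS' =>
        hφ _ ⟨T, hTG, hT, rfl⟩ (h0 T hTG hT hTS) _ ⟨T', hTG', hT', rfl⟩ (h0 T' hTG' hT' hTS')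
      refine ⟨?_, ?_⟩
      · rintro ⟨⟨a, b⟩, he⟩ h1 ⟨⟨c, d⟩, hf⟩ h2
        rw [← val_coe, ← val_coe]
        have h1 := (mem_inS_mk he).mp h1
        have h2 := (mem_inS_mk hf).mp h2
        exact const_inside φ hG hS hφ' he h1.1 h1.2 hf h2.1 h2.2
      · rintro ⟨⟨a, b⟩, he⟩ h1 ⟨⟨c, d⟩, hf⟩ h2
        rw [← val_coe, ← val_coe]
        exact const_outside φ h2c hS.1 hS' hφ' he (fun h => h1 ((mem_inS_mk he).mpr h)) hf
          (fun h => h2 ((mem_inS_mk hf).mpr h))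

end Facets

/-! ### The spanning tree polytope by inequalities -/

section Edmonds

variable {V : Type*} {G : SimpleGraph V}

lemma exists_edge_of_not_reachable {T F : SimpleGraph V} (hT : T.IsTree) {u v : V}
    (h : ¬ F.Reachable u v) :
    ∃ a b, T.Adj a b ∧ ¬ F.Adj a b ∧ ¬ (T.deleteEdges {s(a, b)}).Reachable u v := by
  classical
  obtain ⟨p, hp⟩ := (hT.connected u v).exists_isPath
  have : ∃ e ∈ p.edges, e ∉ F.edgeSet := by
    by_contra! hcon
    exact h ⟨p.transfer F hcon⟩
  obtain ⟨⟨a, b⟩, he, heF⟩ := this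
  refine ⟨a, b, p.edges_subset_edgeSet he, heF, fun hr => ?_⟩
  obtain ⟨q, hq⟩ := hr.exists_isPath
  have hpq := (hT.isAcyclic.subsingleton_path u v).elim ⟨p, hp⟩
    ⟨q.mapLe (SimpleGraph.deleteEdges_le _), hq.mapLe (SimpleGraph.deleteEdges_le _)⟩
  have hpq : p = q.mapLe (SimpleGraph.deleteEdges_le _) := congrArg Subtype.val hpq
  rw [hpq, SimpleGraph.Walk.edges_mapLe_eq_edges] at he
  have := q.edges_subset_edgeSet he
  rw [SimpleGraph.edgeSet_deleteEdges] at this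
  exact this.2 rfl

variable [Finite V]

lemma trees_finite : (trees G).Finite :=
  ((Set.toFinite (Set.univ : Set (SimpleGraph V))).image (chi G)).subset (by
    rintro _ ⟨T, -, -, rfl⟩
    exact ⟨T, trivial, rfl⟩)

lemma sumOn_mono {ι : Type*} [Finite ι] {A B : Set ι} (hAB : A ⊆ B) {x : ι → ℝ}
    (hx : ∀ e, 0 ≤ x e) : sumOn A x ≤ sumOn B x := by
  have := Fintype.ofFinite ι
  rw [sumOn_eq_sum, sumOn_eq_sum]
  exact Finset.sum_le_sum fun e _ => Set.indicator_le_indicator_of_subset hAB hx e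

/-- The greedy property of a maximum weight spanning tree `T`: among the edges of weight at
least `t`, it contains a maximum forest. Hence no point `x` of the spanning tree polytope has more
mass than `T` on these edges. -/
lemma level_le {φ : (G.edgeSet → ℝ) →ₗ[ℝ] ℝ} {T : SimpleGraph V} (hTG : T ≤ G) (hT : T.IsTree)
    (hmax : ∀ y ∈ trees G, φ y ≤ φ (chi G T)) {x : G.edgeSet → ℝ} (hx : ∀ e, 0 ≤ x e)
    (hU : ∀ U : Set V, U.Nonempty → sumOn (inS G U) x ≤ (U.ncard : ℝ) - 1) (t : ℝ) :
    sumOn {e | t ≤ φ (bv e)} x ≤ sumOn {e | t ≤ φ (bv e)} (chi G T) := by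
  classical
  let F : SimpleGraph V :=
    { Adj := fun a b => T.Adj a b ∧ t ≤ val φ s(a, b)
      symm := ⟨fun _ _ h => ⟨h.1.symm, Sym2.eq_swap ▸ h.2⟩⟩
      loopless := ⟨fun _ h => h.1.ne rfl⟩ }
  have hFT : F ≤ T := fun _ _ h => h.1
  have hreach : ∀ u v, G.Adj u v → t ≤ val φ s(u, v) → F.Reachable u v := by
    intro u v huv ht
    by_contra hcon
    obtain ⟨a, b, hab, hF, hnr⟩ := exists_edge_of_not_reachable hT hcon
    have h1 : val φ s(a, b) < t := not_le.mp fun h => hF ⟨hab, h⟩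
    have h2 := hmax _ ⟨_, swap_le hTG huv, isTree_exchange hT hab hnr, rfl⟩
    rw [chi_swap (e := ⟨s(a, b), hTG hab⟩) (f := ⟨s(u, v), huv⟩) rfl rfl hab hnr, map_add,
      map_sub] at h2
    rw [val_mk φ (hTG hab)] at h1
    rw [val_mk φ huv] at ht
    linarith
  set A : Set G.edgeSet := {e | t ≤ φ (bv e)} with hA
  -- the edges of weight at least `t` are partitioned by the components of `F`
  have hAC : A = ⋃ C : F.ConnectedComponent, A ∩ inS G C.supp := by
    rw [← Set.inter_iUnion, eq_comm, Set.inter_eq_left]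
    rintro ⟨⟨a, b⟩, he⟩ hea
    have hr := hreach a b he (by rw [val_mk φ he]; exact hea)
    refine Set.mem_iUnion.mpr ⟨F.connectedComponentMk a, (mem_inS_mk he).mpr ⟨rfl, ?_⟩⟩
    exact SimpleGraph.ConnectedComponent.eq.mpr hr.symm
  have hdisj : Pairwise (Function.onFun Disjoint fun C : F.ConnectedComponent =>
      A ∩ inS G C.supp) := by
    intro C D hCD
    refine Set.disjoint_left.mpr ?_
    rintro ⟨⟨a, b⟩, he⟩ ⟨-, h1⟩ ⟨-, h2⟩
    have h1 := ((mem_inS_mk he).mp h1).1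
    have h2 := ((mem_inS_mk he).mp h2).1
    exact hCD (h1.symm.trans h2)
  have hsum : ∀ z : G.edgeSet → ℝ, sumOn A z =
      ∑ᶠ C : F.ConnectedComponent, sumOn (A ∩ inS G C.supp) z := fun z => by
    conv_lhs => rw [hAC, sumOn_apply]
    exact finsum_mem_iUnion hdisj fun _ => Set.toFinite _
  have := Fintype.ofFinite F.ConnectedComponent
  rw [hsum, hsum, finsum_eq_sum_of_fintype, finsum_eq_sum_of_fintype]
  refine Finset.sum_le_sum fun C _ => ?_
  obtain ⟨v, hv⟩ := C.nonempty_supp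
  have hC : CutConn F C.supp := cutConn_iff.mpr C.connected_toSimpleGraph
  calc sumOn (A ∩ inS G C.supp) x ≤ sumOn (inS G C.supp) x := sumOn_mono Set.inter_subset_right hx
    _ ≤ (C.supp.ncard : ℝ) - 1 := hU _ ⟨v, hv⟩
    _ ≤ sumOn (inS G C.supp) (chi G F) := le_sumOn_inS_chi (hFT.trans hTG) hC
    _ = sumOn (A ∩ inS G C.supp) (chi G T) := by
      have := Fintype.ofFinite G.edgeSet
      rw [sumOn_eq_sum, sumOn_eq_sum, chi, chi, Set.indicator_indicator, Set.indicator_indicator]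
      refine Finset.sum_congr rfl fun e _ => ?_
      congr 1
      ext ⟨⟨a, b⟩, he⟩
      have h1 : (s(a, b) ∈ F.edgeSet) ↔ s(a, b) ∈ T.edgeSet ∧ t ≤ φ (bv ⟨s(a, b), he⟩) := by
        rw [← val_mk φ he]; rfl
      change _ ∧ s(a, b) ∈ F.edgeSet ↔ (t ≤ φ (bv ⟨s(a, b), he⟩) ∧ _) ∧ s(a, b) ∈ T.edgeSet
      rw [h1]
      tauto

/-- Edmonds' description of the spanning tree polytope. A point outside the hull would be
separated from it by a functional `φ`; but a spanning tree maximizing `φ` is at least as good as `x`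
on every upper level set of `φ`, hence on `φ` itself. -/
lemma edmonds (hG : G.Connected) {x : G.edgeSet → ℝ} (hx : ∀ e, 0 ≤ x e)
    (hU : ∀ U : Set V, U.Nonempty → sumOn (inS G U) x ≤ (U.ncard : ℝ) - 1)
    (hxV : sumOn Set.univ x = (Nat.card V : ℝ) - 1) : x ∈ convexHull ℝ (trees G) := by
  by_contra hcon
  obtain ⟨f, u, hf, hfx⟩ := geometric_hahn_banach_closed_point (convex_convexHull ℝ (trees G))
    (trees_finite.isClosed_convexHull (𝕜 := ℝ)) hcon
  let φ : (G.edgeSet → ℝ) →ₗ[ℝ] ℝ := f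
  obtain ⟨_, ⟨T, hTG, hT, rfl⟩, hmax⟩ :=
    Set.exists_max_image (trees G) φ trees_finite (trees_nonempty hG)
  have h1 : φ (chi G T) < u := hf _ (subset_convexHull ℝ _ ⟨T, hTG, hT, rfl⟩)
  have h2 : φ (x - chi G T) ≤ 0 := by
    refine layer φ _ ?_ fun t => ?_
    · rw [map_sub, hxV, sumOn_chi_of_isTree hTG hT, sub_self]
    · rw [map_sub, sub_nonpos]
      exact level_le hTG hT hmax hx hU t
  rw [map_sub] at h2
  have h3 : u < φ x := hfx
  linarith

end Edmonds

/-! ### Reduction to good flats -/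

section Reduction

variable {V : Type*} {G : SimpleGraph V}

lemma CutConn.exists_adj {A B : Set V} (h : CutConn G (A ∪ B)) (hA : A.Nonempty)
    (hB : B.Nonempty) (hAB : Disjoint A B) : ∃ a ∈ A, ∃ b ∈ B, G.Adj a b := by
  obtain ⟨a, ha⟩ := hA
  obtain ⟨b, hb⟩ := hB
  by_contra! hcon
  exact Set.disjoint_left.mp hAB (h.2 A ⟨a, .inl ha, ha⟩ (fun x _ y hy hx hxy =>
    hy.resolve_right fun hy => hcon x hx y hy hxy) (.inr hb)) hb

lemma inS_eq_empty {N : Set V} (hN : N.Subsingleton) : inS G N = ∅ := by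
  refine Set.eq_empty_iff_forall_notMem.mpr ?_
  rintro ⟨⟨a, b⟩, he⟩ h
  have h := (mem_inS_mk he).mp h
  exact SimpleGraph.Adj.ne he (hN h.1 h.2)

variable [Finite V]

lemma sumOn_inS_subsingleton {N : Set V} (hN : N.Subsingleton) (x : G.edgeSet → ℝ) :
    sumOn (inS G N) x = 0 := by
  rw [inS_eq_empty hN, sumOn_apply, finsum_mem_empty]

/-- The function `U ↦ ∑_{e ∈ E(U)} x_e` is modular on `U₁`, `U₂` if `x` vanishes on the edges
between `U₁ \ U₂` and `U₂ \ U₁`. -/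
lemma sumOn_union_add_inter {U₁ U₂ : Set V} {x : G.edgeSet → ℝ}
    (h : ∀ a b (hab : G.Adj a b), a ∈ U₁ → a ∉ U₂ → b ∈ U₂ → b ∉ U₁ → x ⟨s(a, b), hab⟩ = 0) :
    sumOn (inS G (U₁ ∪ U₂)) x + sumOn (inS G (U₁ ∩ U₂)) x =
      sumOn (inS G U₁) x + sumOn (inS G U₂) x := by
  classical
  have := Fintype.ofFinite G.edgeSet
  rw [sumOn_eq_sum, sumOn_eq_sum, sumOn_eq_sum, sumOn_eq_sum, ← Finset.sum_add_distrib,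
    ← Finset.sum_add_distrib]
  refine Finset.sum_congr rfl ?_
  rintro ⟨⟨a, b⟩, he⟩ -
  have hab : G.Adj a b := he
  have hba : (⟨Quot.mk _ (a, b), he⟩ : G.edgeSet) = ⟨s(b, a), hab.symm⟩ :=
    Subtype.ext Sym2.eq_swap
  have h1 : ∀ U : Set V, (inS G U).indicator x ⟨Quot.mk _ (a, b), he⟩ =
      if a ∈ U ∧ b ∈ U then x ⟨Quot.mk _ (a, b), he⟩ else 0 := fun U => by
    rw [Set.indicator_apply]
    exact if_congr (mem_inS_mk hab) rfl rfl
  have h2 : a ∈ U₁ → a ∉ U₂ → b ∈ U₂ → b ∉ U₁ → x ⟨Quot.mk _ (a, b), he⟩ = 0 := h a b hab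
  have h3 : b ∈ U₁ → b ∉ U₂ → a ∈ U₂ → a ∉ U₁ → x ⟨Quot.mk _ (a, b), he⟩ = 0 :=
    hba ▸ h b a hab.symm
  simp only [h1, Set.mem_union, Set.mem_inter_iff]
  by_cases a1 : a ∈ U₁ <;> by_cases a2 : a ∈ U₂ <;> by_cases b1 : b ∈ U₁ <;>
    by_cases b2 : b ∈ U₂ <;> simp_all

/-- Modularity for a separation: `A` and `B` are disjoint, and `x` vanishes on the edges joining
them.  The set `N` plays the role of the separator. -/
lemma sumOn_separation {A B N : Set V} {x : G.edgeSet → ℝ} (hAB : Disjoint A B)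
    (h : ∀ a b (hab : G.Adj a b), a ∈ A → b ∈ B → x ⟨s(a, b), hab⟩ = 0) :
    sumOn (inS G (A ∪ B ∪ N)) x + sumOn (inS G N) x =
        sumOn (inS G (A ∪ N)) x + sumOn (inS G (B ∪ N)) x ∧
      ((A ∪ B ∪ N).ncard : ℝ) + N.ncard = (A ∪ N).ncard + (B ∪ N).ncard := by
  have h1 : A ∪ B ∪ N = (A ∪ N) ∪ (B ∪ N) := by
    ext; simp only [Set.mem_union]; tauto
  have h2 : (A ∪ N) ∩ (B ∪ N) = N := by
    rw [← Set.inter_union_distrib_right, hAB.inter_eq, Set.empty_union]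
  constructor
  · rw [← sumOn_union_add_inter (U₁ := A ∪ N) (U₂ := B ∪ N), h2, h1]
    rintro a b hab (ha | ha) ha' (hb | hb) hb'
    · exact h a b hab ha hb
    · exact (hb' (.inr hb)).elim
    · exact (ha' (.inr ha)).elim
    · exact (ha' (.inr ha)).elim
  · have h3 := Set.ncard_union_add_ncard_inter (A ∪ N) (B ∪ N)
    rw [h2, ← h1] at h3
    exact_mod_cast h3

/-- A minimal set violating the inequality of the spanning tree polytope is `2`-connected. -/
lemma exists_violator {x : G.edgeSet → ℝ} {U₀ : Set V} (hU₀ : U₀.Nonempty)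
    (hlt : (U₀.ncard : ℝ) - 1 < sumOn (inS G U₀) x) :
    ∃ U, TC G U ∧ (U.ncard : ℝ) - 1 < sumOn (inS G U) x := by
  obtain ⟨U, ⟨hne, hU⟩, hmin⟩ := Set.exists_min_image
    {U : Set V | U.Nonempty ∧ (U.ncard : ℝ) - 1 < sumOn (inS G U) x} Set.ncard (Set.toFinite _)
    ⟨U₀, hU₀, hlt⟩
  have hsmall : ∀ W ⊂ U, W.Nonempty → sumOn (inS G W) x ≤ (W.ncard : ℝ) - 1 := by
    intro W hWU hW
    by_contra! hcon
    exact (hmin W ⟨hW, hcon⟩).not_gt (Set.ncard_lt_ncard hWU)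
  -- `U` cannot be separated by a set with at most one vertex
  have key : ∀ N : Set V, N ⊆ U → N.Subsingleton → (U \ N).Nonempty → CutConn G (U \ N) := by
    intro N hNU hN hUN
    by_contra hcon
    obtain ⟨A, B, ⟨a, ha⟩, ⟨b, hb⟩, hAB, hdisj, hno⟩ := exists_split hUN hcon
    have hAN : Disjoint A N := (Set.disjoint_sdiff_left (s := N)).mono_left
      (Set.subset_union_left.trans hAB.le)
    have hBN : Disjoint B N := (Set.disjoint_sdiff_left (s := N)).mono_left
      (Set.subset_union_right.trans hAB.le)
    obtain ⟨h1, h2⟩ := sumOn_separation (G := G) (x := x) hdisj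
      fun a b hab ha hb => (hno a ha b hb hab).elim
    have hUeq : A ∪ B ∪ N = U := by rw [hAB, Set.sdiff_union_of_subset hNU]
    rw [hUeq, sumOn_inS_subsingleton hN] at h1
    rw [hUeq] at h2
    have hAs : A ∪ N ⊂ U := by
      refine ⟨hUeq ▸ (by intro z; simp only [Set.mem_union]; tauto), fun h => ?_⟩
      rcases h (hUeq.le (.inl (.inr hb))) with h | h
      · exact Set.disjoint_left.mp hdisj h hb
      · exact Set.disjoint_left.mp hBN hb h
    have hBs : B ∪ N ⊂ U := by
      refine ⟨hUeq ▸ (by intro z; simp only [Set.mem_union]; tauto), fun h => ?_⟩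
      rcases h (hUeq.le (.inl (.inl ha))) with h | h
      · exact Set.disjoint_left.mp hdisj ha h
      · exact Set.disjoint_left.mp hAN ha h
    have h3 := hsmall _ hAs ⟨a, .inl ha⟩
    have h4 := hsmall _ hBs ⟨b, .inl hb⟩
    have h5 : (N.ncard : ℝ) ≤ 1 := by exact_mod_cast Set.ncard_le_one_iff_subsingleton.mpr hN
    linarith
  refine ⟨U, ⟨?_, fun v hv => ?_⟩, hU⟩
  · simpa using key ∅ (Set.empty_subset _) Set.subsingleton_empty (by simpa using hne)
  · refine key {v} (Set.singleton_subset_iff.mpr hv) Set.subsingleton_singleton ?_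
    by_contra hcon
    have hUv : U = {v} := subset_antisymm
      (Set.sdiff_eq_empty.mp (Set.not_nonempty_iff_eq_empty.mp hcon))
      (Set.singleton_subset_iff.mpr hv)
    rw [hUv, sumOn_inS_subsingleton Set.subsingleton_singleton, Set.ncard_singleton] at hU
    norm_num at hU

/-- The inequalities for good flats imply those for all vertex sets: a maximal `2`-connected
violator `U` would be a good flat, since if `G - U` were disconnected, with parts `W` and `W'`, one
of `U ∪ W`, `U ∪ W'` would be a larger one. -/
lemma sumOn_le_of_good (h2c : IsTwoConnected G) {x : G.edgeSet → ℝ}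
    (hxV : sumOn Set.univ x = (Nat.card V : ℝ) - 1)
    (hgood : ∀ S, IsGoodFlat G S → sumOn (inS G S) x ≤ (S.ncard : ℝ) - 1) {U₀ : Set V}
    (hU₀ : U₀.Nonempty) : sumOn (inS G U₀) x ≤ (U₀.ncard : ℝ) - 1 := by
  by_contra! hlt
  obtain ⟨U, ⟨hTC, hU⟩, hmax⟩ := Set.exists_max_image
    {U : Set V | TC G U ∧ (U.ncard : ℝ) - 1 < sumOn (inS G U) x} Set.ncard (Set.toFinite _)
    (exists_violator hU₀ hlt)
  have hUc : Uᶜ.Nonempty := by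
    rw [Set.nonempty_compl]
    rintro rfl
    rw [inS_univ, hxV, Set.ncard_univ] at hU
    exact lt_irrefl _ hU
  have hnc : ¬ CutConn G Uᶜ := fun h =>
    (hgood U ((isGoodFlat_iff h2c).mpr ⟨hTC, h⟩)).not_gt hU
  obtain ⟨A, B, ⟨a, ha⟩, ⟨b, hb⟩, hAB, hdisj, hno⟩ := exists_split hUc hnc
  have hAU : Disjoint A U := disjoint_compl_left.mono_left (Set.subset_union_left.trans hAB.le)
  have hBU : Disjoint B U := disjoint_compl_left.mono_left (Set.subset_union_right.trans hAB.le)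
  obtain ⟨h1, h2⟩ := sumOn_separation (G := G) (x := x) hdisj
    fun a b hab ha hb => (hno a ha b hb hab).elim
  have huniv : A ∪ B ∪ U = Set.univ := by rw [hAB, Set.compl_union_self]
  rw [huniv, inS_univ, hxV] at h1
  rw [huniv, Set.ncard_univ] at h2
  have hcov : ∀ z, z ∉ U → z ∈ A ∨ z ∈ B := fun z hz => hAB.ge hz
  have hA : TC G (A ∪ U) := by
    refine TC.enlarge h2c hTC Set.subset_union_right ?_
    intro z hz hzU w hzw
    have hzA := hz.resolve_right hzU
    by_cases hw : w ∈ U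
    · exact .inr hw
    · exact .inl ((hcov w hw).resolve_right fun hwB => hno z hzA w hwB hzw)
  have hB : TC G (B ∪ U) := by
    refine TC.enlarge h2c hTC Set.subset_union_right ?_
    intro z hz hzU w hzw
    have hzB := hz.resolve_right hzU
    by_cases hw : w ∈ U
    · exact .inr hw
    · exact .inl ((hcov w hw).resolve_left fun hwA => hno w hwA z hzB hzw.symm)
  have hlarge : ∀ W, TC G W → U ⊂ W → sumOn (inS G W) x ≤ (W.ncard : ℝ) - 1 := by
    intro W hW hUW
    by_contra! hcon
    exact (hmax W ⟨hW, hcon⟩).not_gt (Set.ncard_lt_ncard hUW)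
  have h3 := hlarge _ hA ⟨Set.subset_union_right, fun h =>
    Set.disjoint_left.mp hAU ha (h (.inl ha))⟩
  have h4 := hlarge _ hB ⟨Set.subset_union_right, fun h =>
    Set.disjoint_left.mp hBU hb (h (.inl hb))⟩
  linarith

/-- The nonnegativity of `x_e` follows from the inequalities for vertex sets if the deletion of
`e` destroys `2`-connectivity. -/
lemma nonneg_of_not_twoConnected (h2c : IsTwoConnected G) {x : G.edgeSet → ℝ}
    (hxV : sumOn Set.univ x = (Nat.card V : ℝ) - 1)
    (hU : ∀ U : Set V, U.Nonempty → sumOn (inS G U) x ≤ (U.ncard : ℝ) - 1) (e : G.edgeSet)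
    (he : ¬ IsTwoConnected (G.deleteEdges {(e : Sym2 V)})) : 0 ≤ x e := by
  obtain ⟨hG, hGv⟩ := isTwoConnected_iff.mp h2c
  -- a separation of `G ∖ e` of order at most one
  have hN : ∃ N : Set V, N.Subsingleton ∧ CutConn G Nᶜ ∧
      ¬ CutConn (G.deleteEdges {(e : Sym2 V)}) Nᶜ := by
    by_contra! hcon
    refine he (isTwoConnected_iff.mpr ⟨?_, fun v => hcon {v} Set.subsingleton_singleton (hGv v)⟩)
    simpa using hcon ∅ Set.subsingleton_empty (by simpa using hG)
  obtain ⟨N, hN, hGN, hcut⟩ := hN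
  obtain ⟨A, B, hA, hB, hAB, hdisj, hno⟩ := exists_split hGN.1 hcut
  have hAN : Disjoint A N := disjoint_compl_left.mono_left (Set.subset_union_left.trans hAB.le)
  have hBN : Disjoint B N := disjoint_compl_left.mono_left (Set.subset_union_right.trans hAB.le)
  have huniq : ∀ a b (hab : G.Adj a b), a ∈ A → b ∈ B → (⟨s(a, b), hab⟩ : G.edgeSet) = e := by
    intro a b hab ha hb
    by_contra hne
    exact hno a ha b hb ((SimpleGraph.deleteEdges_adj).mpr ⟨hab, fun h => hne (Subtype.ext h)⟩)
  obtain ⟨a, ha, b, hb, hab⟩ := (hAB ▸ hGN : CutConn G (A ∪ B)).exists_adj hA hB hdisj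
  have hab' := huniq a b hab ha hb
  -- remove the contribution of the only edge `e` across the separation
  set y : G.edgeSet → ℝ := x - x e • bv e with hy
  have hye : y e = 0 := by simp [hy, bv]
  obtain ⟨h1, h2⟩ := sumOn_separation (G := G) (x := y) hdisj
    fun a b hab ha hb => by rw [huniq a b hab ha hb, hye]
  have huniv : A ∪ B ∪ N = Set.univ := by rw [hAB, Set.compl_union_self]
  have hnA : e ∉ inS G (A ∪ N) := by
    rw [← hab']
    intro h
    rcases ((mem_inS_mk hab).mp h).2 with h | h
    · exact Set.disjoint_left.mp hdisj h hb
    · exact Set.disjoint_left.mp hBN hb h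
  have hnB : e ∉ inS G (B ∪ N) := by
    rw [← hab']
    intro h
    rcases ((mem_inS_mk hab).mp h).1 with h | h
    · exact Set.disjoint_left.mp hdisj ha h
    · exact Set.disjoint_left.mp hAN ha h
  rw [huniv, inS_univ, sumOn_inS_subsingleton hN, hy, map_sub, map_sub, map_sub, map_smul,
    map_smul, map_smul, sumOn_bv_of_mem (Set.mem_univ e), sumOn_bv_of_notMem hnA,
    sumOn_bv_of_notMem hnB, hxV] at h1
  rw [huniv, Set.ncard_univ] at h2
  have h3 := hU (A ∪ N) ⟨a, .inl ha⟩
  have h4 := hU (B ∪ N) ⟨b, .inl hb⟩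
  have h5 : (N.ncard : ℝ) ≤ 1 := by exact_mod_cast Set.ncard_le_one_iff_subsingleton.mpr hN
  simp only [smul_eq_mul, mul_one, mul_zero, sub_zero, add_zero] at h1
  linarith

end Reduction

/-! ### The theorem -/

theorem stmt3 {V : Type*} [Fintype V] [DecidableEq V] (G : SimpleGraph V)
    (h2c : IsTwoConnected G) :
    ((affineSpan ℝ (basePolytopeE G) : Set (↥G.edgeSet → ℝ)) =
        {x | ∑ᶠ e : ↥G.edgeSet, x e = (Nat.card V : ℝ) - 1}) ∧
    (∀ x : ↥G.edgeSet → ℝ, x ∈ basePolytopeE G ↔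
      ((∑ᶠ e : ↥G.edgeSet, x e = (Nat.card V : ℝ) - 1) ∧
       (∀ e : ↥G.edgeSet, IsTwoConnected (G.deleteEdges {(e : Sym2 V)}) → 0 ≤ x e) ∧
       (∀ S : Set V, IsGoodFlat G S →
         (∑ᶠ e ∈ {e : ↥G.edgeSet | (e : Sym2 V) ∈ edgesIn G S}, x e) ≤
           ((S.ncard : ℝ) - 1) / ((Nat.card V : ℝ) - 1) * ∑ᶠ e : ↥G.edgeSet, x e))) ∧
    (∀ e : ↥G.edgeSet, IsTwoConnected (G.deleteEdges {(e : Sym2 V)}) →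
      IsSupportingFaceIneq (basePolytopeE G) fun x => x e) ∧
    (∀ S : Set V, IsGoodFlat G S →
      IsSupportingFaceIneq (basePolytopeE G) fun x =>
        ((S.ncard : ℝ) - 1) / ((Nat.card V : ℝ) - 1) * (∑ᶠ e : ↥G.edgeSet, x e) -
          ∑ᶠ e ∈ {e : ↥G.edgeSet | (e : Sym2 V) ∈ edgesIn G S}, x e) := by
  have hn : (Nat.card V : ℝ) - 1 ≠ 0 := by
    have := h2c.nontrivial
    have h1 : (1 : ℝ) < Nat.card V := by exact_mod_cast Finite.one_lt_card
    linarith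
  refine ⟨?_, fun x => ⟨fun hx => ?_, ?_⟩, facet_edge h2c, fun S hS => facet_flat h2c hS⟩
  · rw [basePolytopeE_eq h2c.1,
      affineSpan_hull (trees_nonempty h2c.1) sumOn_of_mem_trees (const_trees h2c)]
    simp only [sumOn_univ]
  · rw [basePolytopeE_eq h2c.1] at hx
    have hsum := eq_on_convexHull sumOn_of_mem_trees x hx
    rw [sumOn_univ] at hsum
    refine ⟨hsum, fun e _ => nonneg_of_mem_hull e x hx, fun S hS => ?_⟩
    rw [hsum, div_mul_cancel₀ _ hn]
    exact sumOn_le_of_mem_hull ((isGoodFlat_iff h2c).mp hS).1.1.1 x hx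
  · rintro ⟨hsum, hnn, hflat⟩
    have hxV : sumOn Set.univ x = (Nat.card V : ℝ) - 1 := by rw [sumOn_univ, hsum]
    have hU : ∀ U : Set V, U.Nonempty → sumOn (inS G U) x ≤ (U.ncard : ℝ) - 1 := fun U =>
      sumOn_le_of_good h2c hxV fun S hS => by
        have h := hflat S hS
        rw [hsum, div_mul_cancel₀ _ hn] at h
        exact h
    rw [basePolytopeE_eq h2c.1]
    refine edmonds h2c.1 (fun e => ?_) hU hxV
    by_cases he : IsTwoConnected (G.deleteEdges {(e : Sym2 V)})
    · exact hnn e he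
    · exact nonneg_of_not_twoConnected h2c hxV hU e he

end Gor
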